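/- arXiv:2404.19125 — 3 statements merged into one kernel-verified Lean document; each statement's English description precedes it below -/
import Mathlib

section
/- With the setup below, there exists a function h in the class 𝐡 on {(x,y) : y > y₀} such that for all z = x + iy with y > y₀, F(z) = p(y) + h(x,y), where p(y) := Q̃(exp(2iy·N)·a₀, conj a₀). Moreover, p is a polynomial function of y of degree at most d whose coefficient of y^d equals ((2i)^d / d!)·Q̃(N^d·a₀, conj a₀) = ((−2i)^d / d!)·Q̃(a₀, N^d·(conj a₀)); in particular, p has degree exactly d if and only if Q̃(a₀, N^d·(conj a₀)) ≠ 0. -/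
/-- Partial derivative in the first (`x`) variable. -/
noncomputable def pdX {E : Type*} [NormedAddCommGroup E] [NormedSpace ℝ E]
    (f : ℝ → ℝ → E) : ℝ → ℝ → E :=
  fun x y => deriv (fun x' => f x' y) x

/-- Partial derivative in the second (`y`) variable. -/
noncomputable def pdY {E : Type*} [NormedAddCommGroup E] [NormedSpace ℝ E]
    (f : ℝ → ℝ → E) : ℝ → ℝ → E :=
  fun x y => deriv (fun y' => f x y') y

/-- The class 𝐡 of smooth functions on `{(x,y) | y > y₀}` all of whose iterated partial
derivatives `∂_x^r ∂_y^s f` decay like `e^{-π y}` as `y → ∞`, uniformly in `x`. -/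
def InClassH {E : Type*} [NormedAddCommGroup E] [NormedSpace ℝ E]
    (y₀ : ℝ) (f : ℝ → ℝ → E) : Prop :=
  ContDiffOn ℝ (⊤ : ℕ∞) (fun q : ℝ × ℝ => f q.1 q.2) {q : ℝ × ℝ | y₀ < q.2} ∧
  ∀ r s : ℕ, ∃ C : ℝ, 0 < C ∧ ∃ Y : ℝ, y₀ < Y ∧ ∀ x y : ℝ, Y ≤ y →
    ‖(pdX^[r] (pdY^[s] f)) x y‖ ≤ C * Real.exp (-Real.pi * y)

/-!
Let `q = e ^ (2πiz)`. Since `N` is real and skew-adjoint for the pairing, both exponentials can be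
moved to the left argument, where they combine to
`F z = Q̃ (exp (2iyN) (a q)) (conj (a q))`. Replacing `a q` by `a 0` gives the polynomial `p y`.
As `N` is nilpotent, the difference is a finite sum of terms `y ^ k * g q` with `g` smooth near `0`
and `g 0 = 0`. Sums of this kind are stable under `∂ₓ` and `∂ᵧ`, and they are `O(e ^ (-πy))` because
`‖q‖ = e ^ (-2πy)` and the spare factor `e ^ (-πy)` absorbs `y ^ k`.
-/

section NomeExpansion

open Asymptotics Complex Filter Function.Periodic Metric
open scoped ContDiff Real Topology

/-- The nome `q = e ^ (2πiz)` as a function of the real coordinates of `z = x + iy`. -/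
noncomputable def nome (x y : ℝ) : ℂ :=
  qParam 1 (x + y * I)

lemma nome_eq_exp (x y : ℝ) : nome x y = exp (2 * π * I * (x + y * I)) := by
  simp [nome, qParam]

lemma norm_nome (x y : ℝ) : ‖nome x y‖ = Real.exp (-(2 * π * y)) := by
  simp [nome, norm_qParam]

lemma exp_neg_two_pi_mul_le {r y₀ : ℝ} (hr : 0 < r) (hy₀ : -(Real.log r) / (2 * π) ≤ y₀) :
    Real.exp (-(2 * π * y₀)) ≤ r := by
  rw [div_le_iff₀' Real.two_pi_pos] at hy₀
  rw [← Real.le_log_iff_exp_le hr]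
  linarith

lemma nome_mem_ball {r y₀ x y : ℝ} (hr : Real.exp (-(2 * π * y₀)) ≤ r) (hy : y₀ < y) :
    nome x y ∈ ball (0 : ℂ) r := by
  rw [mem_ball_zero_iff, norm_nome]
  refine lt_of_lt_of_le (Real.exp_lt_exp.mpr ?_) hr
  gcongr

lemma contDiff_nome : ContDiff ℝ ∞ fun q : ℝ × ℝ => nome q.1 q.2 := by
  have hofReal : ContDiff ℝ ∞ ofReal := ofRealCLM.contDiff
  exact ((contDiff_qParam ∞).restrict_scalars ℝ).comp
    ((hofReal.comp contDiff_fst).add ((hofReal.comp contDiff_snd).mul contDiff_const))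

lemma hasDerivAt_nome_left (x y : ℝ) :
    HasDerivAt (fun t => nome t y) (2 * π * I * nome x y) x := by
  simp only [nome_eq_exp]
  have hofReal : HasDerivAt ofReal 1 x := ofRealCLM.hasDerivAt
  exact ((hofReal.add_const (y * I)).const_mul (2 * π * I)).cexp.congr_deriv (by ring)

lemma hasDerivAt_nome_right (x y : ℝ) :
    HasDerivAt (fun t => nome x t) (-(2 * π) * nome x y) y := by
  simp only [nome_eq_exp]
  have hofReal : HasDerivAt ofReal 1 y := ofRealCLM.hasDerivAt
  refine (((hofReal.mul_const I).const_add (x : ℂ)).const_mul (2 * π * I)).cexp.congr_deriv ?_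
  linear_combination 2 * π * exp (2 * π * I * (x + y * I)) * I_mul_I

lemma tendsto_nome : Tendsto (fun q : ℝ × ℝ => nome q.1 q.2) (comap Prod.snd atTop) (𝓝 0) := by
  have him : Tendsto (fun q : ℝ × ℝ => (q.1 + q.2 * I : ℂ)) (comap Prod.snd atTop)
      (comap im atTop) := by
    simpa [tendsto_comap_iff, Function.comp_def] using tendsto_comap
  exact ((qParam_tendsto one_pos).mono_right nhdsWithin_le_nhds).comp him

variable {E : Type*} [NormedAddCommGroup E] [NormedSpace ℝ E]

lemma isBigO_pow_smul_comp_nome {g : ℂ → E} (hg : DifferentiableAt ℝ g 0) (hg0 : g 0 = 0)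
    (k : ℕ) :
    (fun q : ℝ × ℝ => q.2 ^ k • g (nome q.1 q.2)) =O[comap Prod.snd atTop]
      fun q => Real.exp (-π * q.2) := by
  have hpow : (fun q : ℝ × ℝ => q.2 ^ k) =O[comap Prod.snd atTop] fun q => Real.exp (π * q.2) :=
    (isLittleO_pow_exp_pos_mul_atTop k Real.pi_pos).isBigO.comp_tendsto tendsto_comap
  have hvanish : g =O[𝓝 0] fun w => w := by simpa [hg0] using hg.isBigO_sub
  have hcomp : (fun q : ℝ × ℝ => g (nome q.1 q.2)) =O[comap Prod.snd atTop]
      fun q => Real.exp (-(2 * π * q.2)) := by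
    simpa only [Function.comp_def, norm_nome] using (hvanish.comp_tendsto tendsto_nome).norm_right
  refine (hpow.smul hcomp).congr_right fun q => ?_
  rw [smul_eq_mul, ← Real.exp_add]
  ring_nf

/-- `f` has a *nome expansion* if, on the half-plane `y₀ < y`, it is a finite sum of terms
`y ^ k • g (q)` where `q` is the nome and `g` is a real-smooth function on the disc of radius `r`
vanishing at the cusp `q = 0`. The index type `ι` is arbitrary, so exponents may repeat. -/
def HasNomeExpansion (r y₀ : ℝ) (f : ℝ → ℝ → E) : Prop :=
  ∃ (ι : Type) (_ : Fintype ι) (k : ι → ℕ) (g : ι → ℂ → E),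
    (∀ i, ContDiffOn ℝ ∞ (g i) (ball 0 r)) ∧ (∀ i, g i 0 = 0) ∧
    ∀ x y, y₀ < y → f x y = ∑ i, y ^ k i • g i (nome x y)

lemma contDiffOn_fderiv_apply_mul {r : ℝ} {g : ℂ → E} (hg : ContDiffOn ℝ ∞ g (ball 0 r)) (c : ℂ) :
    ContDiffOn ℝ ∞ (fun w => fderiv ℝ g w (c * w)) (ball 0 r) :=
  (hg.fderiv_of_isOpen isOpen_ball le_rfl).clm_apply (by fun_prop)

lemma hasFDerivAt_at_nome {r y₀ x y : ℝ} {g : ℂ → E} (hr : Real.exp (-(2 * π * y₀)) ≤ r)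
    (hg : ContDiffOn ℝ ∞ g (ball 0 r)) (hy : y₀ < y) :
    HasFDerivAt g (fderiv ℝ g (nome x y)) (nome x y) :=
  ((hg.contDiffAt (isOpen_ball.mem_nhds (nome_mem_ball hr hy))).differentiableAt
    (by simp)).hasFDerivAt

namespace HasNomeExpansion

variable {r y₀ : ℝ} {f : ℝ → ℝ → E}

lemma contDiffOn (hf : HasNomeExpansion r y₀ f) (hr : Real.exp (-(2 * π * y₀)) ≤ r) :
    ContDiffOn ℝ ∞ (fun q : ℝ × ℝ => f q.1 q.2) {q | y₀ < q.2} := by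
  obtain ⟨ι, _, k, g, hg, -, hfg⟩ := hf
  refine ContDiffOn.congr (ContDiffOn.sum fun i _ => ?_) fun q hq => hfg q.1 q.2 hq
  exact (contDiff_snd.pow (k i)).contDiffOn.smul
    ((hg i).comp contDiff_nome.contDiffOn fun q hq => nome_mem_ball hr hq)

protected lemma pdX (hf : HasNomeExpansion r y₀ f) (hr : Real.exp (-(2 * π * y₀)) ≤ r) :
    HasNomeExpansion r y₀ (pdX f) := by
  obtain ⟨ι, _, k, g, hg, -, hfg⟩ := hf
  refine ⟨ι, inferInstance, k, fun i w => fderiv ℝ (g i) w (2 * π * I * w),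
    fun i => contDiffOn_fderiv_apply_mul (hg i) _, fun i => by simp, fun x y hy => ?_⟩
  have hsum : HasDerivAt (fun t => ∑ i, y ^ k i • g i (nome t y))
      (∑ i, y ^ k i • fderiv ℝ (g i) (nome x y) (2 * π * I * nome x y)) x :=
    HasDerivAt.fun_sum fun i _ =>
      ((hasFDerivAt_at_nome hr (hg i) hy).comp_hasDerivAt x (hasDerivAt_nome_left x y)).const_smul _
  have heq : (fun t => f t y) = fun t => ∑ i, y ^ k i • g i (nome t y) :=
    funext fun t => hfg t y hy
  rw [pdX, heq, hsum.deriv]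

protected lemma pdY (hf : HasNomeExpansion r y₀ f) (hr : Real.exp (-(2 * π * y₀)) ≤ r) :
    HasNomeExpansion r y₀ (pdY f) := by
  obtain ⟨ι, _, k, g, hg, hg0, hfg⟩ := hf
  refine ⟨ι ⊕ ι, inferInstance, Sum.elim k fun i => k i - 1,
    Sum.elim (fun i w => fderiv ℝ (g i) w (-(2 * π) * w)) fun i w => (k i : ℝ) • g i w,
    ?_, ?_, fun x y hy => ?_⟩
  · rintro (i | i)
    · exact contDiffOn_fderiv_apply_mul (hg i) _
    · exact (hg i).const_smul _
  · rintro (i | i) <;> simp [hg0]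
  have hterm (i : ι) : HasDerivAt (fun t => t ^ k i • g i (nome x t))
      (y ^ k i • fderiv ℝ (g i) (nome x y) (-(2 * π) * nome x y) +
        y ^ (k i - 1) • (k i : ℝ) • g i (nome x y)) y := by
    rw [smul_smul, mul_comm (y ^ (k i - 1))]
    exact (hasDerivAt_pow (k i) y).smul
      ((hasFDerivAt_at_nome hr (hg i) hy).comp_hasDerivAt y (hasDerivAt_nome_right x y))
  have heq : (fun t => f x t) =ᶠ[𝓝 y] fun t => ∑ i, t ^ k i • g i (nome x t) := by
    filter_upwards [lt_mem_nhds hy] with t ht using hfg x t ht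
  simp only [Fintype.sum_sum_type, Sum.elim_inl, Sum.elim_inr, ← Finset.sum_add_distrib]
  exact heq.deriv_eq.trans (HasDerivAt.fun_sum fun i _ => hterm i).deriv

lemma iterate_pdX_pdY (hf : HasNomeExpansion r y₀ f) (hr : Real.exp (-(2 * π * y₀)) ≤ r)
    (j s : ℕ) : HasNomeExpansion r y₀ (pdX^[j] (pdY^[s] f)) := by
  have hs : HasNomeExpansion r y₀ (pdY^[s] f) :=
    Function.Iterate.rec (HasNomeExpansion r y₀) hf (fun _ h => h.pdY hr) s
  exact Function.Iterate.rec (HasNomeExpansion r y₀) hs (fun _ h => h.pdX hr) j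

lemma isBigO (hf : HasNomeExpansion r y₀ f) (hr : 0 < r) :
    (fun q : ℝ × ℝ => f q.1 q.2) =O[comap Prod.snd atTop] fun q => Real.exp (-π * q.2) := by
  obtain ⟨ι, _, k, g, hg, hg0, hfg⟩ := hf
  have hdiff (i : ι) : DifferentiableAt ℝ (g i) 0 :=
    ((hg i).contDiffAt (ball_mem_nhds 0 hr)).differentiableAt (by simp)
  have heq : (fun q : ℝ × ℝ => f q.1 q.2) =ᶠ[comap Prod.snd atTop]
      fun q => ∑ i, q.2 ^ k i • g i (nome q.1 q.2) := by
    filter_upwards [tendsto_comap.eventually (eventually_gt_atTop y₀)] with q hq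
      using hfg q.1 q.2 hq
  exact heq.trans_isBigO
    (IsBigO.fun_sum fun i _ => isBigO_pow_smul_comp_nome (hdiff i) (hg0 i) (k i))

theorem inClassH (hf : HasNomeExpansion r y₀ f) (hr : Real.exp (-(2 * π * y₀)) ≤ r) :
    InClassH y₀ f := by
  refine ⟨hf.contDiffOn hr, fun j s => ?_⟩
  obtain ⟨C, hC, hbound⟩ :=
    ((hf.iterate_pdX_pdY hr j s).isBigO ((Real.exp_pos _).trans_le hr)).exists_pos
  rw [isBigOWith_iff, eventually_comap, eventually_atTop] at hbound
  obtain ⟨Y, hY⟩ := hbound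
  refine ⟨C, hC, max Y (y₀ + 1), (lt_add_one y₀).trans_le (le_max_right _ _), fun x y hy => ?_⟩
  simpa using hY y ((le_max_left _ _).trans hy) (x, y) rfl

end HasNomeExpansion

end NomeExpansion

section NilpotentExponential

open IsNilpotent (exp)
open LinearMap (IsAdjointPair)
open Module (End)

variable {𝕜 V : Type*} [Field 𝕜] [AddCommGroup V] [Module 𝕜 V]

lemma pow_finrank_eq_zero_of_isNilpotent [FiniteDimensional 𝕜 V] {N : End 𝕜 V}
    (hN : IsNilpotent N) : N ^ Module.finrank 𝕜 V = 0 := by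
  simpa [IsNilpotent.charpoly_eq_X_pow_finrank hN] using N.aeval_self_charpoly

lemma pow_mul_apply_pow_of_isSkewAdjoint {R M : Type*} [CommRing R] [AddCommGroup M] [Module R M]
    {B : M →ₗ[R] M →ₗ[R] R} {N : End R M} (hBN : B.IsSkewAdjoint N) (c : R) (k : ℕ) (u v : M) :
    c ^ k * B ((N ^ k) u) v = (-c) ^ k * B u ((N ^ k) v) := by
  induction k generalizing v with
  | zero => simp
  | succ k ih =>
    have hstep : B ((N ^ (k + 1)) u) v = -B ((N ^ k) u) (N v) := by
      rw [pow_succ', Module.End.mul_apply, hBN, Pi.neg_apply, map_neg]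
    rw [hstep, pow_succ N, Module.End.mul_apply, pow_succ, pow_succ]
    linear_combination -c * ih (N v)

variable [Module ℚ V] {N : End 𝕜 V}

lemma exp_smul_apply_eq_sum (hN : IsNilpotent N) {K : ℕ} {u : V} (hu : (N ^ K) u = 0) (z : 𝕜) :
    exp (z • N) u = ∑ k ∈ Finset.range K, (z ^ k / k.factorial) • (N ^ k) u := by
  have hzu : (z • N) ^ K • u = 0 := by simp [smul_pow, hu]
  refine (IsNilpotent.exp_smul_eq_sum hzu (hN.smul z)).trans (Finset.sum_congr rfl fun k _ => ?_)
  rw [inv_natCast_smul_eq ℚ 𝕜, smul_pow, Module.End.smul_def, LinearMap.smul_apply, smul_smul,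
    inv_mul_eq_div]

lemma isAdjointPair_exp_smul {B : V →ₗ[𝕜] V →ₗ[𝕜] 𝕜} (hBN : B.IsSkewAdjoint N)
    (hN : IsNilpotent N) (z : 𝕜) : IsAdjointPair B B ⇑(exp (z • N)) ⇑(exp (-z • N)) := by
  intro u v
  obtain ⟨K, hK⟩ := id hN
  simp only [exp_smul_apply_eq_sum hN (K := K) (by simp [hK]), map_sum, LinearMap.sum_apply,
    map_smul, LinearMap.smul_apply, smul_eq_mul, div_mul_eq_mul_div,
    pow_mul_apply_pow_of_isSkewAdjoint hBN]

lemma semilinear_exp_smul_apply {τ : 𝕜 →+* 𝕜} {σ : V →ₛₗ[τ] V} (hσN : ∀ u, σ (N u) = N (σ u))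
    (hN : IsNilpotent N) (z : 𝕜) (u : V) : σ (exp (z • N) u) = exp (τ z • N) (σ u) := by
  obtain ⟨K, hK⟩ := id hN
  have hpow (k : ℕ) : σ ((N ^ k) u) = (N ^ k) (σ u) := by
    simpa [Module.End.coe_pow] using
      (Function.Semiconj.iterate_right (f := σ) (ga := N) (gb := N) hσN k) u
  simp [exp_smul_apply_eq_sum hN (K := K) (by simp [hK]), hpow]

theorem pairing_exp_smul_semilinear {B : V →ₗ[𝕜] V →ₗ[𝕜] 𝕜} (hBN : B.IsSkewAdjoint N)
    (hN : IsNilpotent N) {τ : 𝕜 →+* 𝕜} {σ : V →ₛₗ[τ] V} (hσN : ∀ u, σ (N u) = N (σ u))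
    (z : 𝕜) (u : V) :
    B (exp (z • N) u) (σ (exp (z • N) u)) = B (exp ((z - τ z) • N) u) (σ u) := by
  have hadd : exp ((z - τ z) • N) = exp (-τ z • N) * exp (z • N) := by
    rw [sub_eq_neg_add, add_smul]
    exact IsNilpotent.exp_add_of_commute (((Commute.refl N).smul_left _).smul_right _)
      (hN.smul _) (hN.smul _)
  rw [semilinear_exp_smul_apply hσN hN, hadd, Module.End.mul_apply,
    isAdjointPair_exp_smul hBN hN (-τ z), neg_neg]

end NilpotentExponential

section ExpPairingPolynomial

open IsNilpotent (exp)
open Module (End)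
open Polynomial

variable {𝕜 V W : Type*} [Field 𝕜] [AddCommGroup V] [Module 𝕜 V] [AddCommGroup W] [Module 𝕜 W]

/-- The polynomial `∑ k ≤ d, c ^ k / k! * B (N ^ k u) v * X ^ k`, that is, the pairing
`B (exp (c X N) u) v` with the exponential series truncated after degree `d`. -/
noncomputable def expPairingPolynomial (B : V →ₗ[𝕜] W →ₗ[𝕜] 𝕜) (N : End 𝕜 V) (c : 𝕜) (d : ℕ)
    (u : V) (v : W) : 𝕜[X] :=
  ∑ k ∈ Finset.range (d + 1), monomial k (c ^ k / k.factorial * B ((N ^ k) u) v)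

variable (B : V →ₗ[𝕜] W →ₗ[𝕜] 𝕜) (N : End 𝕜 V) (c : 𝕜) (d : ℕ) (u : V) (v : W)

lemma degree_expPairingPolynomial_le : (expPairingPolynomial B N c d u v).degree ≤ d :=
  (degree_sum_le _ _).trans <| Finset.sup_le fun k hk =>
    (degree_monomial_le k _).trans (by exact_mod_cast Finset.mem_range_succ_iff.mp hk)

lemma coeff_expPairingPolynomial :
    (expPairingPolynomial B N c d u v).coeff d = c ^ d / d.factorial * B ((N ^ d) u) v := by
  simp [expPairingPolynomial, coeff_monomial]

variable {N d u} in
lemma eval_expPairingPolynomial [Module ℚ V] (hN : IsNilpotent N) (hu : (N ^ (d + 1)) u = 0)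
    (t : 𝕜) : (expPairingPolynomial B N c d u v).eval t = B (exp ((c * t) • N) u) v := by
  simp only [expPairingPolynomial, eval_finsetSum, eval_monomial, exp_smul_apply_eq_sum hN hu,
    map_sum, LinearMap.sum_apply, map_smul, LinearMap.smul_apply, smul_eq_mul]
  exact Finset.sum_congr rfl fun k _ => by ring

variable {c} in
lemma degree_expPairingPolynomial_eq_iff [CharZero 𝕜] {B : V →ₗ[𝕜] V →ₗ[𝕜] 𝕜} {N : End 𝕜 V}
    (hBN : B.IsSkewAdjoint N) (hc : c ≠ 0) (v : V) :
    (expPairingPolynomial B N c d u v).degree = d ↔ B u ((N ^ d) v) ≠ 0 := by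
  have hcoeff : (expPairingPolynomial B N c d u v).coeff d =
      (-c) ^ d / d.factorial * B u ((N ^ d) v) := by
    rw [coeff_expPairingPolynomial, div_mul_eq_mul_div, div_mul_eq_mul_div,
      pow_mul_apply_pow_of_isSkewAdjoint hBN]
  calc (expPairingPolynomial B N c d u v).degree = d
      ↔ (expPairingPolynomial B N c d u v).coeff d ≠ 0 :=
        ⟨coeff_ne_zero_of_eq_degree,
          degree_eq_of_le_of_coeff_ne_zero (degree_expPairingPolynomial_le B N c d u v)⟩
    _ ↔ B u ((N ^ d) v) ≠ 0 := by simp [hcoeff, hc, d.factorial_ne_zero]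

end ExpPairingPolynomial

section PairingExpansion

open IsNilpotent (exp)
open Complex (I)
open Metric
open scoped ContDiff

variable {V W : Type*} [NormedAddCommGroup V] [NormedSpace ℂ V] [FiniteDimensional ℂ V]
  [NormedAddCommGroup W] [NormedSpace ℂ W] [FiniteDimensional ℂ W]

lemma contDiffOn_bilin_apply (B : V →ₗ[ℂ] W →ₗ[ℂ] ℂ) {a : ℂ → V} {b : ℂ → W} {s : Set ℂ}
    (ha : ContDiffOn ℝ ∞ a s) (hb : ContDiffOn ℝ ∞ b s) :
    ContDiffOn ℝ ∞ (fun w => B (a w) (b w)) s :=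
  ((B.toContinuousBilinearMap.isBoundedBilinearMap.contDiff.restrict_scalars ℝ).comp_contDiffOn
    (ha.prodMk hb))

theorem hasNomeExpansion_pairing_exp_sub [Module ℚ V] (B : V →ₗ[ℂ] W →ₗ[ℂ] ℂ)
    {N : Module.End ℂ V} (hN : IsNilpotent N) {r : ℝ} {a : ℂ → V} {b : ℂ → W}
    (ha : ContDiffOn ℝ ∞ a (ball 0 r)) (hb : ContDiffOn ℝ ∞ b (ball 0 r)) (c : ℂ) (y₀ : ℝ) :
    HasNomeExpansion r y₀ fun x y =>
      B (exp ((c * y) • N) (a (nome x y))) (b (nome x y)) - B (exp ((c * y) • N) (a 0)) (b 0) := by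
  obtain ⟨K, hK⟩ := id hN
  let g (k : Fin K) (w : ℂ) : ℂ := (c ^ (k : ℕ) / (k : ℕ).factorial) * B ((N ^ (k : ℕ)) (a w)) (b w)
  refine ⟨Fin K, inferInstance, (↑), fun k w => g k w - g k 0, fun k => ?_, fun k => sub_self _,
    fun x y _ => ?_⟩
  · exact (contDiffOn_const.mul (contDiffOn_bilin_apply (B ∘ₗ N ^ (k : ℕ)) ha hb)).sub
      contDiffOn_const
  · simp only [g, exp_smul_apply_eq_sum hN (K := K) (by simp [hK]), map_sum, map_smul,
      LinearMap.sum_apply, LinearMap.smul_apply, smul_eq_mul, ← Finset.sum_sub_distrib,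
      Finset.sum_range, Complex.real_smul, Complex.ofReal_pow]
    exact Finset.sum_congr rfl fun k _ => by ring

theorem hasNomeExpansion_pairing_exp_conj_sub [Module ℚ V] {B : V →ₗ[ℂ] V →ₗ[ℂ] ℂ}
    {N : Module.End ℂ V} (hBN : B.IsSkewAdjoint N) (hN : IsNilpotent N) {σ : V →L⋆[ℂ] V}
    (hσN : ∀ u, σ (N u) = N (σ u)) {r : ℝ} {a : ℂ → V} (ha : AnalyticOnNhd ℂ a (ball 0 r))
    (y₀ : ℝ) :
    HasNomeExpansion r y₀ fun x y =>
      B (exp ((x + y * I : ℂ) • N) (a (nome x y))) (σ (exp ((x + y * I : ℂ) • N) (a (nome x y)))) -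
        B (exp ((2 * I * y) • N) (a 0)) (σ (a 0)) := by
  have hsmooth : ContDiffOn ℝ ∞ a (ball 0 r) :=
    (ha.contDiffOn isOpen_ball.uniqueDiffOn).restrict_scalars ℝ
  have hσ : ContDiff ℝ ∞ σ := (AddMonoidHom.toRealLinearMap (σ : V →+ V) σ.continuous).contDiff
  have hpair (x y : ℝ) (u : V) :
      B (exp ((x + y * I : ℂ) • N) u) (σ (exp ((x + y * I : ℂ) • N) u)) =
        B (exp ((2 * I * y) • N) u) (σ u) := by
    have hconj : (x + y * I : ℂ) - starRingEnd ℂ (x + y * I) = 2 * I * y := by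
      simp only [map_add, map_mul, Complex.conj_ofReal, Complex.conj_I]
      ring
    exact hconj ▸ pairing_exp_smul_semilinear hBN hN (σ := σ.toLinearMap) hσN _ u
  simp only [hpair]
  exact hasNomeExpansion_pairing_exp_sub B hN hsmooth (hσ.comp_contDiffOn hsmooth) (2 * I) y₀

end PairingExpansion

section RealMatrices

open IsNilpotent (exp)
open scoped Matrix

variable {ι : Type*} [Fintype ι] [DecidableEq ι]

lemma sum_smul_pow_mulVec_eq_exp_apply {𝕜 : Type*} [Field 𝕜] [Module ℚ 𝕜] {A : Matrix ι ι 𝕜}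
    (hA : IsNilpotent A.toLin') {K : ℕ} (hK : Fintype.card ι ≤ K) (z : 𝕜) (u : ι → 𝕜) :
    (∑ k ∈ Finset.range K, (z ^ k / (k.factorial : 𝕜)) • A ^ k) *ᵥ u =
      exp (z • A.toLin') u := by
  have hpow : A.toLin' ^ K = 0 := pow_eq_zero_of_le
    (by rwa [Module.finrank_fintype_fun_eq_card]) (pow_finrank_eq_zero_of_isNilpotent hA)
  rw [exp_smul_apply_eq_sum hA (K := K) (by simp [hpow]), Matrix.sum_mulVec]
  simp only [Matrix.smul_mulVec, ← Matrix.toLin'_pow, Matrix.toLin'_apply]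

lemma isNilpotent_toLin'_map_ofReal {N : Matrix ι ι ℝ} (hN : IsNilpotent N) :
    IsNilpotent (N.map Complex.ofReal).toLin' :=
  (hN.map Complex.ofRealHom.mapMatrix).map Matrix.toLinAlgEquiv'

lemma smul_toLinearMap₂'_map_ofReal_apply (Q : Matrix ι ι ℝ) (c : ℂ) (u v : ι → ℂ) :
    (c • Matrix.toLinearMap₂' ℂ (Q.map Complex.ofReal)) u v =
      c * ∑ j, ∑ k, u j * (Q j k : ℂ) * v k := by
  simp only [LinearMap.smul_apply, Matrix.toLinearMap₂'_apply, Matrix.map_apply, smul_eq_mul,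
    mul_assoc, mul_comm (v _)]

lemma isSkewAdjoint_smul_toLinearMap₂'_map_ofReal {N Q : Matrix ι ι ℝ} (hQN : Nᵀ * Q + Q * N = 0)
    (c : ℂ) : (c • Matrix.toLinearMap₂' ℂ (Q.map Complex.ofReal)).IsSkewAdjoint
      (N.map Complex.ofReal).toLin' := by
  have hmap : (N.map Complex.ofReal)ᵀ * Q.map Complex.ofReal +
      Q.map Complex.ofReal * N.map Complex.ofReal = 0 := by
    rw [← map_zero Complex.ofRealHom.mapMatrix, ← hQN, map_add, map_mul, map_mul]
    rfl
  have hadj : LinearMap.IsAdjointPair (Matrix.toLinearMap₂' ℂ (Q.map Complex.ofReal))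
      (Matrix.toLinearMap₂' ℂ (Q.map Complex.ofReal)) (N.map Complex.ofReal).toLin'
      (-N.map Complex.ofReal).toLin' := by
    rw [isAdjointPair_toLinearMap₂', Matrix.IsAdjointPair, Matrix.mul_neg]
    exact eq_neg_of_add_eq_zero_left hmap
  intro u v
  simpa using congrArg (c * ·) (hadj u v)

lemma star_toLin'_map_ofReal (N : Matrix ι ι ℝ) (u : ι → ℂ) :
    star ((N.map Complex.ofReal).toLin' u) = (N.map Complex.ofReal).toLin' (star u) := by
  ext i
  simp [Matrix.mulVec, dotProduct]

end RealMatrices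

/-- asymptotic expansion `F(z) = p(y) + h(x,y)` of the twisted period pairing,
with `h` in the class 𝐡 and `p` a polynomial of degree at most `d` whose `y^d`-coefficient
is `((2i)^d/d!)·Q̃(N^d a₀, conj a₀) = ((-2i)^d/d!)·Q̃(a₀, N^d conj a₀)`; in particular `p`
has degree exactly `d` iff `Q̃(a₀, N^d conj a₀) ≠ 0`. -/
theorem period_pairing_asymptotic_expansion
    (n m : ℕ) (hn : 1 ≤ n) (hm : 1 ≤ m)
    (N Q : Matrix (Fin m) (Fin m) ℝ)
    (hNnil : IsNilpotent N)
    (hQN : N.transpose * Q + Q * N = 0)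
    (r : ℝ) (hr : 0 < r)
    (a : ℂ → (Fin m → ℂ))
    (ha : AnalyticOnNhd ℂ a (Metric.ball 0 r))
    (ha0 : a 0 ≠ 0)
    (Nc : Matrix (Fin m) (Fin m) ℂ) (hNc : Nc = N.map Complex.ofReal)
    (Qc : (Fin m → ℂ) → (Fin m → ℂ) → ℂ)
    (hQc : ∀ u v, Qc u v = ∑ j, ∑ k, u j * (Q j k : ℂ) * v k)
    (Qt : (Fin m → ℂ) → (Fin m → ℂ) → ℂ)
    (hQt : ∀ u v, Qt u v = Complex.I ^ n * Qc u v)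
    (d : ℕ)
    (hd1 : (Nc ^ d).mulVec (a 0) ≠ 0)
    (hd2 : (Nc ^ (d + 1)).mulVec (a 0) = 0)
    (y₀ : ℝ) (hy₀ : y₀ = max 0 (-(Real.log r) / (2 * Real.pi)))
    (Expz : ℂ → Matrix (Fin m) (Fin m) ℂ)
    (hExpz : ∀ z : ℂ, Expz z =
      ∑ k ∈ Finset.range (m + 1), (z ^ k / (Nat.factorial k : ℂ)) • Nc ^ k)
    (F : ℝ → ℝ → ℂ)
    (hF : ∀ x y : ℝ, F x y =
      Qt ((Expz ((x : ℂ) + (y : ℂ) * Complex.I)).mulVec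
            (a (Complex.exp (2 * Real.pi * Complex.I * ((x : ℂ) + (y : ℂ) * Complex.I)))))
         (star ((Expz ((x : ℂ) + (y : ℂ) * Complex.I)).mulVec
            (a (Complex.exp (2 * Real.pi * Complex.I * ((x : ℂ) + (y : ℂ) * Complex.I)))))))
    (p : ℝ → ℂ)
    (hp : ∀ y : ℝ, p y = Qt ((Expz (2 * Complex.I * (y : ℂ))).mulVec (a 0)) (star (a 0))) :
    (∃ h : ℝ → ℝ → ℂ, InClassH y₀ h ∧ ∀ x y : ℝ, y₀ < y → F x y = p y + h x y) ∧
    (∃ P : Polynomial ℂ, (∀ y : ℝ, p y = P.eval (y : ℂ)) ∧ P.degree ≤ (d : ℕ) ∧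
      P.coeff d = ((2 * Complex.I) ^ d / (Nat.factorial d : ℂ)) *
        Qt ((Nc ^ d).mulVec (a 0)) (star (a 0)) ∧
      (P.degree = (d : ℕ) ↔ Qt (a 0) ((Nc ^ d).mulVec (star (a 0))) ≠ 0)) ∧
    ((2 * Complex.I) ^ d / (Nat.factorial d : ℂ)) *
        Qt ((Nc ^ d).mulVec (a 0)) (star (a 0)) =
      ((-2 * Complex.I) ^ d / (Nat.factorial d : ℂ)) *
        Qt (a 0) ((Nc ^ d).mulVec (star (a 0))) := by
  set L := Nc.toLin' with hLdef
  have hpow (k : ℕ) (u : Fin m → ℂ) : (Nc ^ k).mulVec u = (L ^ k) u := by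
    rw [hLdef, ← Matrix.toLin'_pow, Matrix.toLin'_apply]
  subst hNc
  have hL : IsNilpotent L := isNilpotent_toLin'_map_ofReal hNnil
  have hskew := isSkewAdjoint_smul_toLinearMap₂'_map_ofReal hQN (Complex.I ^ n)
  set B : (Fin m → ℂ) →ₗ[ℂ] (Fin m → ℂ) →ₗ[ℂ] ℂ :=
    Complex.I ^ n • Matrix.toLinearMap₂' ℂ (Q.map Complex.ofReal) with hB
  have hQB (u v : Fin m → ℂ) : Qt u v = B u v := by
    rw [hQt, hQc, hB, smul_toLinearMap₂'_map_ofReal_apply]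
  have hexp (z : ℂ) (u : Fin m → ℂ) : (Expz z).mulVec u = IsNilpotent.exp (z • L) u := by
    rw [hExpz, sum_smul_pow_mulVec_eq_exp_apply hL (by simp)]
  simp only [hQB, hexp, hpow, ← nome_eq_exp] at hF hp hd2 ⊢
  refine ⟨⟨fun x y => F x y - p y, ?_, fun x y _ => by ring⟩,
    ⟨expPairingPolynomial B L (2 * Complex.I) d (a 0) (star (a 0)), fun y => ?_,
      degree_expPairingPolynomial_le .., coeff_expPairingPolynomial ..,
      degree_expPairingPolynomial_eq_iff d (a 0) hskew (by simp) _⟩, ?_⟩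
  · simp only [hF, hp]
    exact (hasNomeExpansion_pairing_exp_conj_sub hskew hL (σ := (starL ℂ).toContinuousLinearMap)
      (star_toLin'_map_ofReal N) ha y₀).inClassH
        (exp_neg_two_pi_mul_le hr (hy₀ ▸ le_max_right _ _))
  · rw [hp, eval_expPairingPolynomial B _ _ hL hd2]
  · rw [div_mul_eq_mul_div, div_mul_eq_mul_div, neg_mul, pow_mul_apply_pow_of_isSkewAdjoint hskew]
end

section
/- Let d ≥ 1 be an integer, p : ℝ → ℝ a polynomial function of degree d with positive leading coefficient, y₀ ∈ ℝ, and h a real-valued function in the class 𝐡 on {(x,y) : y > y₀}. Set F(x,y) := p(y) + h(x,y). Then: (i) there exists Y > y₀ such that F(x,y) > 0 for all x ∈ ℝ and all y ≥ Y; (ii) sup_{x ∈ ℝ} | y² · ((∂_x² + ∂_y²) log F)(x,y) + d | → 0 as y → ∞; in particular, there exists Y' > y₀ such that −((∂_x² + ∂_y²) log F)(x,y) > 0 for all x ∈ ℝ and all y ≥ Y'. -/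
/-!
For `F > 0` one has `Δ log F = F_xx / F - (F_x / F) ^ 2 + F_yy / F - (F_y / F) ^ 2`. If
`F = φ(y) + h(x, y)`, where `φ` behaves like `y ^ α` to second order and `h` is negligible against
`φ`, then after multiplication by `y ^ 2` the two `x`-terms tend to `0`, while the two `y`-terms
tend to `α (α - 1)` and `α ^ 2`; hence `y ^ 2 Δ log F → -α`. A polynomial of degree `d` with
positive leading coefficient is such a `φ` with `α = d`, and `e ^ (-π y)` decays faster than any
power of `y`.
-/

open Filter Topology Asymptotics Polynomial

/-- The filter on the plane of `y → ∞` uniformly in `x`: a limit along it is a limit as `y → ∞` of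
the supremum over all `x`. -/
abbrev uniformAtTop : Filter (ℝ × ℝ) := (⊤ : Filter ℝ) ×ˢ atTop

/-- The Laplacian `∂_x² + ∂_y²` in the plane, in terms of the iterated partial derivatives. -/
noncomputable def laplacianXY (f : ℝ → ℝ → ℝ) (x y : ℝ) : ℝ :=
  pdX (pdX f) x y + pdY (pdY f) x y

/-- Smooth variation of order `n` and index `α` at infinity: `φ` imitates `y ^ α` together with its
first `n` derivatives. The factor `α (α - 1) ⋯ (α - k + 1)` is encoded by `descPochhammer`. -/
structure SmoothlyVarying (n : ℕ) (α : ℝ) (φ : ℝ → ℝ) : Prop where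
  eventually_contDiffAt : ∀ᶠ y in atTop, ContDiffAt ℝ n φ y
  eventually_pos : ∀ᶠ y in atTop, 0 < φ y
  tendsto_pow_mul_iteratedDeriv_div : ∀ k ≤ n,
    Tendsto (fun y => y ^ k * iteratedDeriv k φ y / φ y) atTop (𝓝 ((descPochhammer ℝ k).eval α))

/-- `h` is of class `C ^ n` for large `y`, and, uniformly in `x`, adding `h` to `φ` does not disturb
the asymptotics in `SmoothlyVarying n`. Only unmixed partial derivatives are controlled. -/
structure IsNegligible (n : ℕ) (φ : ℝ → ℝ) (h : ℝ → ℝ → ℝ) : Prop where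
  eventually_contDiffAt : ∀ᶠ q in uniformAtTop, ContDiffAt ℝ n (fun q : ℝ × ℝ => h q.1 q.2) q
  isLittleO_pdX : ∀ k ≤ n,
    (fun q : ℝ × ℝ => q.2 ^ k * pdX^[k] h q.1 q.2) =o[uniformAtTop] fun q => φ q.2
  isLittleO_pdY : ∀ k ≤ n,
    (fun q : ℝ × ℝ => q.2 ^ k * pdY^[k] h q.1 q.2) =o[uniformAtTop] fun q => φ q.2

theorem eventually_uniformAtTop_iff (y₀ : ℝ) {P : ℝ → ℝ → Prop} :
    (∀ᶠ q in uniformAtTop, P q.1 q.2) ↔ ∃ Y, y₀ < Y ∧ ∀ x y, Y ≤ y → P x y := by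
  rw [uniformAtTop, top_prod, eventually_comap, eventually_atTop]
  constructor
  · rintro ⟨Y, hY⟩
    exact ⟨max Y (y₀ + 1), (lt_add_one y₀).trans_le (le_max_right _ _),
      fun x y hy => hY y ((le_max_left _ _).trans hy) (x, y) rfl⟩
  · rintro ⟨Y, -, hY⟩
    exact ⟨Y, fun y hy q hq => hY q.1 q.2 (hq ▸ hy)⟩

section PartialDerivatives

variable {E : Type*} [NormedAddCommGroup E] [NormedSpace ℝ E]

theorem iterate_pdX_apply (k : ℕ) (f : ℝ → ℝ → E) (x y : ℝ) :
    pdX^[k] f x y = iteratedDeriv k (fun x' => f x' y) x := by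
  induction k generalizing x with
  | zero => rfl
  | succ k ih =>
    rw [Function.iterate_succ_apply', pdX, iteratedDeriv_succ]
    simp only [ih]

theorem iterate_pdY_apply (k : ℕ) (f : ℝ → ℝ → E) (x y : ℝ) :
    pdY^[k] f x y = iteratedDeriv k (fun y' => f x y') y := by
  induction k generalizing y with
  | zero => rfl
  | succ k ih =>
    rw [Function.iterate_succ_apply', pdY, iteratedDeriv_succ]
    simp only [ih]

variable {n : WithTop ℕ∞} {f : ℝ → ℝ → E} {q : ℝ × ℝ}

theorem contDiffAt_slice_fst (hf : ContDiffAt ℝ n (fun q : ℝ × ℝ => f q.1 q.2) q) :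
    ContDiffAt ℝ n (fun x => f x q.2) q.1 :=
  ContDiffAt.comp (f := fun x : ℝ => (x, q.2)) q.1 hf (by fun_prop)

theorem contDiffAt_slice_snd (hf : ContDiffAt ℝ n (fun q : ℝ × ℝ => f q.1 q.2) q) :
    ContDiffAt ℝ n (fun y => f q.1 y) q.2 :=
  ContDiffAt.comp (f := fun y : ℝ => (q.1, y)) q.2 hf (by fun_prop)

theorem iterate_pdX_add_of_pos {k : ℕ} (hk : 0 < k) (φ : ℝ → E) (h : ℝ → ℝ → E) (x y : ℝ) :
    pdX^[k] (fun x y => φ y + h x y) x y = pdX^[k] h x y := by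
  simp only [iterate_pdX_apply, iteratedDeriv_const_add hk]

theorem iterate_pdY_add {k : ℕ} {φ : ℝ → E} {h : ℝ → ℝ → E} {x y : ℝ}
    (hφ : ContDiffAt ℝ k φ y) (hh : ContDiffAt ℝ k (fun y => h x y) y) :
    pdY^[k] (fun x y => φ y + h x y) x y = iteratedDeriv k φ y + pdY^[k] h x y := by
  simp only [iterate_pdY_apply, iteratedDeriv_fun_add hφ hh]

end PartialDerivatives

section LaplacianLog

theorem deriv_deriv_log_comp {g : ℝ → ℝ} {t : ℝ} (hg : ContDiffAt ℝ 2 g t) (hgt : g t ≠ 0) :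
    deriv (deriv fun s => Real.log (g s)) t
      = deriv (deriv g) t / g t - (deriv g t / g t) ^ 2 := by
  have hdiff : ∀ᶠ s in 𝓝 t, DifferentiableAt ℝ g s :=
    (hg.eventually (by simp)).mono fun s hs => hs.differentiableAt two_ne_zero
  have hderiv : DifferentiableAt ℝ (deriv g) t :=
    (hg.derivWithin (m := 1) (by norm_num)).differentiableAt one_ne_zero
  have hlog : deriv (fun s => Real.log (g s)) =ᶠ[𝓝 t] fun s => deriv g s / g s := by
    filter_upwards [hdiff, hg.continuousAt.eventually_ne hgt] with s hs hgs
    exact deriv.log hs hgs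
  rw [hlog.deriv_eq, deriv_fun_div hderiv hdiff.self_of_nhds hgt]
  field_simp

variable {F : ℝ → ℝ → ℝ}

theorem laplacianXY_log {q : ℝ × ℝ} (hF : ContDiffAt ℝ 2 (fun q : ℝ × ℝ => F q.1 q.2) q)
    (hq : F q.1 q.2 ≠ 0) :
    laplacianXY (fun x y => Real.log (F x y)) q.1 q.2
      = pdX^[2] F q.1 q.2 / F q.1 q.2 - (pdX^[1] F q.1 q.2 / F q.1 q.2) ^ 2
        + (pdY^[2] F q.1 q.2 / F q.1 q.2 - (pdY^[1] F q.1 q.2 / F q.1 q.2) ^ 2) :=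
  congrArg₂ (· + ·) (deriv_deriv_log_comp (contDiffAt_slice_fst hF) hq)
    (deriv_deriv_log_comp (contDiffAt_slice_snd hF) hq)

theorem tendsto_sq_mul_laplacianXY_log {l : Filter (ℝ × ℝ)} {a b : ℕ → ℝ}
    (hF : ∀ᶠ q in l, ContDiffAt ℝ 2 (fun q : ℝ × ℝ => F q.1 q.2) q)
    (hne : ∀ᶠ q in l, F q.1 q.2 ≠ 0)
    (hX : ∀ k ∈ Set.Icc 1 2,
      Tendsto (fun q : ℝ × ℝ => q.2 ^ k * pdX^[k] F q.1 q.2 / F q.1 q.2) l (𝓝 (a k)))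
    (hY : ∀ k ∈ Set.Icc 1 2,
      Tendsto (fun q : ℝ × ℝ => q.2 ^ k * pdY^[k] F q.1 q.2 / F q.1 q.2) l (𝓝 (b k))) :
    Tendsto (fun q : ℝ × ℝ => q.2 ^ 2 * laplacianXY (fun x y => Real.log (F x y)) q.1 q.2) l
      (𝓝 (a 2 - a 1 ^ 2 + (b 2 - b 1 ^ 2))) := by
  have hlim := ((hX 2 (by simp)).sub ((hX 1 (by simp)).pow 2)).add
    ((hY 2 (by simp)).sub ((hY 1 (by simp)).pow 2))
  refine hlim.congr' ?_
  filter_upwards [hF, hne] with q hFq hq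
  rw [laplacianXY_log hFq hq]
  ring

end LaplacianLog

namespace IsNegligible

variable {n : ℕ} {α : ℝ} {φ : ℝ → ℝ} {h : ℝ → ℝ → ℝ}

theorem isLittleO (hh : IsNegligible n φ h) :
    (fun q : ℝ × ℝ => h q.1 q.2) =o[uniformAtTop] fun q => φ q.2 := by
  simpa using hh.isLittleO_pdX 0 n.zero_le

theorem isEquivalent_add (hh : IsNegligible n φ h) :
    (fun q : ℝ × ℝ => φ q.2 + h q.1 q.2) ~[uniformAtTop] fun q => φ q.2 :=
  IsEquivalent.refl.add_isLittleO hh.isLittleO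

theorem eventually_add_pos (hh : IsNegligible n φ h) (hφ : ∀ᶠ y in atTop, 0 < φ y) :
    ∀ᶠ q : ℝ × ℝ in uniformAtTop, 0 < φ q.2 + h q.1 q.2 := by
  filter_upwards [hh.isLittleO.def one_half_pos, tendsto_snd.eventually hφ] with q hq hpos
  rw [Real.norm_of_nonneg hpos.le] at hq
  linarith [neg_le_of_abs_le hq]

theorem eventually_contDiffAt_add (hh : IsNegligible n φ h)
    (hφ : ∀ᶠ y in atTop, ContDiffAt ℝ n φ y) :
    ∀ᶠ q in uniformAtTop, ContDiffAt ℝ n (fun q : ℝ × ℝ => φ q.2 + h q.1 q.2) q := by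
  filter_upwards [tendsto_snd.eventually hφ, hh.eventually_contDiffAt] with q hφq hhq
  exact (hφq.comp q contDiffAt_snd).add hhq

theorem tendsto_pow_mul_pdX_add_div (hh : IsNegligible n φ h) {k : ℕ} (hk : 0 < k) (hkn : k ≤ n) :
    Tendsto (fun q : ℝ × ℝ =>
        q.2 ^ k * pdX^[k] (fun x y => φ y + h x y) q.1 q.2 / (φ q.2 + h q.1 q.2))
      uniformAtTop (𝓝 0) := by
  simp only [iterate_pdX_add_of_pos hk]
  exact ((hh.isLittleO_pdX k hkn).trans_isEquivalent hh.isEquivalent_add.symm).tendsto_div_nhds_zero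

theorem tendsto_pow_mul_pdY_add_div (hh : IsNegligible n φ h) (hφ : SmoothlyVarying n α φ)
    {k : ℕ} (hkn : k ≤ n) :
    Tendsto (fun q : ℝ × ℝ =>
        q.2 ^ k * pdY^[k] (fun x y => φ y + h x y) q.1 q.2 / (φ q.2 + h q.1 q.2))
      uniformAtTop (𝓝 ((descPochhammer ℝ k).eval α)) := by
  have hpos : ∀ᶠ q : ℝ × ℝ in uniformAtTop, 0 < φ q.2 := tendsto_snd.eventually hφ.eventually_pos
  have hmain : Tendsto (fun q : ℝ × ℝ => q.2 ^ k * iteratedDeriv k φ q.2 / φ q.2) uniformAtTop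
      (𝓝 ((descPochhammer ℝ k).eval α)) :=
    (hφ.tendsto_pow_mul_iteratedDeriv_div k hkn).comp tendsto_snd
  have hratio : Tendsto (fun q : ℝ × ℝ => (φ q.2 + h q.1 q.2) / φ q.2) uniformAtTop (𝓝 1) :=
    (isEquivalent_iff_tendsto_one (hpos.mono fun _ => ne_of_gt)).1 hh.isEquivalent_add
  have hlim := (hmain.add (hh.isLittleO_pdY k hkn).tendsto_div_nhds_zero).div hratio one_ne_zero
  rw [add_zero, div_one] at hlim
  refine hlim.congr' ?_
  filter_upwards [hpos, hh.eventually_add_pos hφ.eventually_pos, hh.eventually_contDiffAt,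
    tendsto_snd.eventually hφ.eventually_contDiffAt] with q hφpos hsum hhq hφq
  rw [iterate_pdY_add (hφq.of_le (mod_cast hkn))
    ((contDiffAt_slice_snd hhq).of_le (mod_cast hkn)), Pi.div_apply]
  field_simp

theorem tendsto_sq_mul_laplacianXY_log_add (hh : IsNegligible 2 φ h)
    (hφ : SmoothlyVarying 2 α φ) :
    Tendsto (fun q : ℝ × ℝ => q.2 ^ 2 * laplacianXY (fun x y => Real.log (φ y + h x y)) q.1 q.2)
      uniformAtTop (𝓝 (-α)) := by
  have hlim := tendsto_sq_mul_laplacianXY_log (a := 0)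
    (hh.eventually_contDiffAt_add hφ.eventually_contDiffAt)
    ((hh.eventually_add_pos hφ.eventually_pos).mono fun _ => ne_of_gt)
    (fun k hk => hh.tendsto_pow_mul_pdX_add_div hk.1 hk.2)
    (fun k hk => hh.tendsto_pow_mul_pdY_add_div hφ hk.2)
  have hconst : ((0 : ℕ → ℝ) 2 - (0 : ℕ → ℝ) 1 ^ 2
      + ((descPochhammer ℝ 2).eval α - (descPochhammer ℝ 1).eval α ^ 2)) = -α := by
    simp only [descPochhammer_succ_eval, descPochhammer_zero, eval_one, Pi.zero_apply]
    push_cast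
    ring
  rwa [hconst] at hlim

end IsNegligible

section PolynomialAsymptotics

variable {𝕜 : Type*} [NormedField 𝕜] [LinearOrder 𝕜] [IsStrictOrderedRing 𝕜] [OrderTopology 𝕜]

theorem tendsto_eval_div_eval_atTop_of_natDegree_le {p q : 𝕜[X]} (hp : p ≠ 0)
    (hqp : q.natDegree ≤ p.natDegree) :
    Tendsto (fun y => q.eval y / p.eval y) atTop
      (𝓝 (q.coeff p.natDegree / p.leadingCoeff)) := by
  have hdeg : q.degree ≤ p.degree :=
    (degree_le_of_natDegree_le hqp).trans_eq (degree_eq_natDegree hp).symm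
  rcases hdeg.lt_or_eq with hlt | heq
  · rw [coeff_natDegree_eq_zero_of_degree_lt hlt, zero_div]
    exact q.div_tendsto_atTop_zero_of_degree_lt p hlt
  · rw [← natDegree_eq_of_degree_eq heq, coeff_natDegree]
    exact q.div_tendsto_atTop_leadingCoeff_div_of_degree_eq p heq

theorem tendsto_pow_mul_eval_iterate_derivative_div_eval {p : 𝕜[X]} (hp : p ≠ 0) (k : ℕ) :
    Tendsto (fun y => y ^ k * (derivative^[k] p).eval y / p.eval y) atTop
      (𝓝 (p.natDegree.descFactorial k : 𝕜)) := by
  rcases lt_or_ge p.natDegree k with hlt | hle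
  · simp [iterate_derivative_eq_zero hlt, Nat.descFactorial_eq_zero_iff_lt.2 hlt]
  have hdeg : (X ^ k * derivative^[k] p).natDegree ≤ p.natDegree := by
    have hmul := natDegree_mul_le (p := X ^ k) (q := derivative^[k] p)
    have hderiv := natDegree_iterate_derivative p k
    rw [natDegree_X_pow] at hmul
    lia
  have hcoeff : (X ^ k * derivative^[k] p).coeff p.natDegree
      = p.natDegree.descFactorial k * p.leadingCoeff := by
    rw [coeff_X_pow_mul', if_pos hle, coeff_iterate_derivative, Nat.sub_add_cancel hle,
      nsmul_eq_mul, coeff_natDegree]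
  have hlim := tendsto_eval_div_eval_atTop_of_natDegree_le hp hdeg
  rw [hcoeff, mul_div_cancel_right₀ _ (leadingCoeff_ne_zero.2 hp)] at hlim
  simpa only [eval_mul, eval_pow, eval_X] using hlim

theorem eventually_eval_pos_atTop {p : 𝕜[X]} (hlead : 0 < p.leadingCoeff) :
    ∀ᶠ y in atTop, 0 < p.eval y := by
  have hlim := tendsto_eval_div_eval_atTop_of_natDegree_le (p := X ^ p.natDegree) (q := p)
    (pow_ne_zero _ X_ne_zero) (natDegree_X_pow p.natDegree).ge
  simp only [natDegree_X_pow, coeff_natDegree, leadingCoeff_X_pow, div_one, eval_pow,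
    eval_X] at hlim
  filter_upwards [hlim.eventually (lt_mem_nhds hlead), eventually_gt_atTop 0] with y hy hy0
  exact (div_pos_iff_of_pos_right (pow_pos hy0 _)).1 hy

theorem one_isBigO_eval_atTop {p : 𝕜[X]} (hp : p ≠ 0) :
    (fun _ => 1 : 𝕜 → 𝕜) =O[atTop] fun y => p.eval y := by
  simpa using isBigO_atTop_of_degree_le (1 : 𝕜[X]) p (by simpa using zero_le_degree_iff.2 hp)

end PolynomialAsymptotics

theorem iteratedDeriv_eval {𝕜 : Type*} [NontriviallyNormedField 𝕜] (p : 𝕜[X]) (k : ℕ) :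
    iteratedDeriv k (fun y => p.eval y) = fun y => (derivative^[k] p).eval y := by
  induction k with
  | zero => simp
  | succ k ih =>
    ext y
    rw [iteratedDeriv_succ, ih, Polynomial.deriv, Function.iterate_succ_apply']

theorem smoothlyVarying_eval (n : ℕ) {p : ℝ[X]} (hlead : 0 < p.leadingCoeff) :
    SmoothlyVarying n p.natDegree fun y => p.eval y where
  eventually_contDiffAt := .of_forall fun y => by
    simpa using (p.contDiff_aeval (𝕜 := ℝ) n).contDiffAt
  eventually_pos := eventually_eval_pos_atTop hlead
  tendsto_pow_mul_iteratedDeriv_div k _ := by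
    rw [descPochhammer_eval_eq_descFactorial]
    simp only [iteratedDeriv_eval]
    exact tendsto_pow_mul_eval_iterate_derivative_div_eval (leadingCoeff_ne_zero.1 hlead.ne') k

namespace InClassH

variable {E : Type*} [NormedAddCommGroup E] [NormedSpace ℝ E] {y₀ : ℝ}

theorem eventually_contDiffAt {f : ℝ → ℝ → E} (hf : InClassH y₀ f) (n : ℕ) :
    ∀ᶠ q in uniformAtTop, ContDiffAt ℝ n (fun q : ℝ × ℝ => f q.1 q.2) q := by
  filter_upwards [tendsto_snd.eventually (eventually_gt_atTop y₀)] with q hq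
  have hopen : IsOpen {q : ℝ × ℝ | y₀ < q.2} := isOpen_lt continuous_const continuous_snd
  exact (hf.1.contDiffAt (hopen.mem_nhds hq)).of_le (mod_cast le_top)

theorem pow_smul_isLittleO_one {f : ℝ → ℝ → E} (hf : InClassH y₀ f) (n r s : ℕ) :
    (fun q : ℝ × ℝ => q.2 ^ n • pdX^[r] (pdY^[s] f) q.1 q.2) =o[uniformAtTop]
      fun _ => (1 : ℝ) := by
  obtain ⟨C, -, hC⟩ := hf.2 r s
  have hdecay : (fun q : ℝ × ℝ => pdX^[r] (pdY^[s] f) q.1 q.2) =O[uniformAtTop]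
      fun q => Real.exp (-Real.pi * q.2) := by
    have hbound := (eventually_uniformAtTop_iff y₀).2 hC
    exact .of_bound C (by simpa using hbound)
  have hpow : (fun q : ℝ × ℝ => q.2 ^ n) =o[uniformAtTop] fun q => Real.exp (Real.pi * q.2) :=
    (isLittleO_pow_exp_pos_mul_atTop n Real.pi_pos).comp_tendsto tendsto_snd
  refine (hpow.smul_isBigO hdecay).congr_right fun q => ?_
  rw [smul_eq_mul, ← Real.exp_add, neg_mul, add_neg_cancel, Real.exp_zero]

theorem isNegligible {h : ℝ → ℝ → ℝ} (hh : InClassH y₀ h) (n : ℕ) {φ : ℝ → ℝ}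
    (hφ : (fun _ => 1 : ℝ → ℝ) =O[atTop] φ) : IsNegligible n φ h where
  eventually_contDiffAt := hh.eventually_contDiffAt n
  isLittleO_pdX k _ :=
    (hh.pow_smul_isLittleO_one k k 0).trans_isBigO (hφ.comp_tendsto tendsto_snd)
  isLittleO_pdY k _ :=
    (hh.pow_smul_isLittleO_one k 0 k).trans_isBigO (hφ.comp_tendsto tendsto_snd)

end InClassH

theorem laplacian_log_of_polynomial_plus_h_general {α : ℝ} (hα : 0 < α) {φ : ℝ → ℝ}
    (hφ : SmoothlyVarying 2 α φ) {h : ℝ → ℝ → ℝ} (hh : IsNegligible 2 φ h) (y₀ : ℝ) :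
    (∃ Y, y₀ < Y ∧ ∀ x y, Y ≤ y → 0 < φ y + h x y) ∧
    (∀ ε, 0 < ε → ∃ Y, y₀ < Y ∧ ∀ x y, Y ≤ y →
      |y ^ 2 * laplacianXY (fun x y => Real.log (φ y + h x y)) x y + α| ≤ ε) ∧
    (∃ Y, y₀ < Y ∧ ∀ x y, Y ≤ y → 0 < -laplacianXY (fun x y => Real.log (φ y + h x y)) x y) := by
  have hlim := hh.tendsto_sq_mul_laplacianXY_log_add hφ
  refine ⟨(eventually_uniformAtTop_iff y₀).1 (hh.eventually_add_pos hφ.eventually_pos),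
    fun ε hε => (eventually_uniformAtTop_iff y₀).1 ?_, (eventually_uniformAtTop_iff y₀).1 ?_⟩
  · filter_upwards [hlim.eventually (Metric.closedBall_mem_nhds _ hε)] with q hq
    simpa [Real.dist_eq] using hq
  · filter_upwards [hlim.eventually (gt_mem_nhds (neg_lt_zero.2 hα))] with q hq
    exact neg_pos.2 (neg_of_mul_neg_right hq (sq_nonneg _))

/-- if `F = p(y) + h(x,y)` with `p` a real polynomial of degree `d ≥ 1` with
positive leading coefficient and `h` in the class 𝐡, then `F` is eventually positive,
`y²·Δ(log F) → -d` uniformly in `x` as `y → ∞`, and in particular `-Δ(log F)` is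
eventually positive. -/
theorem laplacian_log_of_polynomial_plus_h
    (d : ℕ) (hd : 1 ≤ d) (p : Polynomial ℝ)
    (hdeg : p.degree = (d : ℕ)) (hlead : 0 < p.leadingCoeff)
    (y₀ : ℝ) (h : ℝ → ℝ → ℝ) (hh : InClassH y₀ h)
    (F : ℝ → ℝ → ℝ) (hF : ∀ x y : ℝ, F x y = p.eval y + h x y) :
    (∃ Y : ℝ, y₀ < Y ∧ ∀ x y : ℝ, Y ≤ y → 0 < F x y) ∧
    (∀ ε : ℝ, 0 < ε → ∃ Y : ℝ, y₀ < Y ∧ ∀ x y : ℝ, Y ≤ y →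
      |y ^ 2 * (pdX (pdX (fun x' y' => Real.log (F x' y'))) x y +
                pdY (pdY (fun x' y' => Real.log (F x' y'))) x y) + (d : ℝ)| ≤ ε) ∧
    (∃ Y' : ℝ, y₀ < Y' ∧ ∀ x y : ℝ, Y' ≤ y →
      0 < -(pdX (pdX (fun x' y' => Real.log (F x' y'))) x y +
            pdY (pdY (fun x' y' => Real.log (F x' y'))) x y)) := by
  obtain rfl : F = fun x y => p.eval y + h x y := funext₂ hF
  obtain rfl : p.natDegree = d := natDegree_eq_of_degree_eq_some hdeg
  have hp : p ≠ 0 := leadingCoeff_ne_zero.1 hlead.ne'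
  exact laplacian_log_of_polynomial_plus_h_general (Nat.cast_pos.2 hd)
    (smoothlyVarying_eval 2 hlead) (hh.isNegligible 2 (one_isBigO_eval_atTop hp)) y₀
end

section
/- With the setup below, assume additionally that Qᵀ = (−1)^n·Q, that N·a₀ = 0, and that Q̃(a₀, conj a₀) is a positive real number. Then F is real-valued, and there exist Y > y₀ and a constant C > 0 such that F > 0 on {(x,y) : y ≥ Y} and |((∂_x² + ∂_y²) log F)(x,y)| ≤ C·e^{−π y} for all x ∈ ℝ and all y ≥ Y; consequently, for every x₀ ∈ ℝ the vertical ray γ(s) := x₀ + i(Y + s), s ∈ [0,∞), has finite length with respect to the density |(∂_x² + ∂_y²) log F|: the function s ↦ √(|((∂_x² + ∂_y²) log F)(x₀, Y + s)|) is Lebesgue integrable on [0,∞). -/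
open MeasureTheory

/-!
For a Hermitian form `h` and a holomorphic curve `v`, the second derivative of `v` drops out of
`Δ log h(v, v) = 4 (h(v', v') / h(v, v) - |h(v, v')|² / h(v, v)²)`, so this expression is
unchanged when an isometry of `h` is applied to both `v` and `v'`. Let `v(z) = exp(zA) a(q)` with
`q = e^{2πiz}`, where `A` is `h`-skew. For real `x` the operator `exp(xA)` is an isometry, so that
`exp(zA)` may be replaced by `exp(iyA)`, which grows only polynomially in `y` because `A` is
nilpotent. If `A a(0) = 0`, then `exp(-zA) v'(z) = A a(q) + 2πi q a'(q)` is `O(q)`, whereas `v`,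
freed of `exp(xA)`, tends to `a(0)`. Hence `Δ log h(v, v)` is `|q|²` up to a polynomial in `y`,
that is `O(e^{-by})` for every `b < 4π`.
-/

open Asymptotics Filter Function.Periodic Topology
open scoped ComplexConjugate

lemma deriv_deriv_log {g g' : ℝ → ℝ} {g'' t : ℝ} (hg : ∀ᶠ s in 𝓝 t, HasDerivAt g (g' s) s)
    (hg' : HasDerivAt g' g'' t) (hgt : g t ≠ 0) :
    deriv (deriv fun s => Real.log (g s)) t = g'' / g t - (g' t / g t) ^ 2 := by
  have hgt' : HasDerivAt g (g' t) t := hg.self_of_nhds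
  have hderiv : deriv (fun s => Real.log (g s)) =ᶠ[𝓝 t] fun s => g' s / g s := by
    filter_upwards [hg, hgt'.continuousAt.eventually_ne hgt] with s hs hgs
    exact (hs.log hgs).deriv
  rw [hderiv.deriv_eq, (hg'.fun_div hgt' hgt).deriv]
  field_simp

section SesquilinearForm

variable {E : Type*} [NormedAddCommGroup E] [NormedSpace ℂ E] (h : E →L⋆[ℂ] E →L[ℂ] ℂ)

lemma isBoundedBilinearMap_sesquilinear :
    IsBoundedBilinearMap ℝ fun p : E × E => h p.1 p.2 where
  add_left := h.map_add₂
  smul_left c u w := by simp [← Complex.coe_smul]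
  add_right u := (h u).map_add
  smul_right c u w := by simp [← Complex.coe_smul]
  bound := ⟨‖h‖ + 1, by positivity, fun u w => (h.le_opNorm₂ u w).trans (by gcongr; simp)⟩

lemma hasDerivAt_sesquilinear {γ δ : ℝ → E} {γ' δ' : E} {t : ℝ} (hγ : HasDerivAt γ γ' t)
    (hδ : HasDerivAt δ δ' t) :
    HasDerivAt (fun s => h (γ s) (δ s)) (h (γ t) δ' + h γ' (δ t)) t :=
  HasFDerivAt.comp_hasDerivAt (l := fun p : E × E => h p.1 p.2)
    (l' := (isBoundedBilinearMap_sesquilinear h).deriv (γ t, δ t)) t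
    ((isBoundedBilinearMap_sesquilinear h).hasFDerivAt (γ t, δ t)) (hγ.prodMk hδ)

lemma deriv_deriv_log_sesquilinear (hh : ∀ u w, conj (h u w) = h w u) {γ γ' : ℝ → E} {γ'' : E}
    {t : ℝ} (hγ : ∀ᶠ s in 𝓝 t, HasDerivAt γ (γ' s) s) (hγ' : HasDerivAt γ' γ'' t)
    (ht : (h (γ t) (γ t)).re ≠ 0) :
    deriv (deriv fun s => Real.log (h (γ s) (γ s)).re) t =
      (2 * (h (γ t) γ'').re + 2 * (h (γ' t) (γ' t)).re) / (h (γ t) (γ t)).re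
        - (2 * (h (γ t) (γ' t)).re / (h (γ t) (γ t)).re) ^ 2 := by
  have re_comm (u w : E) : (h u w).re = (h w u).re := by rw [← hh, Complex.conj_re]
  have hasDerivAt_re {δ ε : ℝ → E} {δ' ε' : E} {s : ℝ} (hδ : HasDerivAt δ δ' s)
      (hε : HasDerivAt ε ε' s) :
      HasDerivAt (fun s => (h (δ s) (ε s)).re) ((h (δ s) ε').re + (h δ' (ε s)).re) s :=
    Complex.reCLM.hasFDerivAt.comp_hasDerivAt s (hasDerivAt_sesquilinear h hδ hε)
  refine deriv_deriv_log (g := fun s => (h (γ s) (γ s)).re) (g' := fun s => 2 * (h (γ s) (γ' s)).re)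
    (hγ.mono fun s hs => ?_) ?_ ht
  · exact (hasDerivAt_re hs hs).congr_deriv (by rw [re_comm (γ' s)]; ring)
  · exact ((hasDerivAt_re hγ.self_of_nhds hγ').const_mul 2).congr_deriv (by ring)

/-- The value of `Δ log h(v, v)` at a point where the holomorphic curve `v` takes the value `p` and
has derivative `w`, for a Hermitian form `h`. It is `0` by convention if `h(p, p) = 0`. -/
noncomputable def logLaplacian (p w : E) : ℝ :=
  4 * ((h w w).re / (h p p).re - (‖h p w‖ / (h p p).re) ^ 2)

variable {h}

lemma laplacian_log_sesquilinear [CompleteSpace E] (hh : ∀ u w, conj (h u w) = h w u)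
    {v : ℂ → E} {x y : ℝ}
    (hv : AnalyticAt ℂ v (x + y * Complex.I))
    (hp : (h (v (x + y * Complex.I)) (v (x + y * Complex.I))).re ≠ 0) :
    letI logNorm : ℝ → ℝ → ℝ := fun x y =>
      Real.log (h (v (x + y * Complex.I)) (v (x + y * Complex.I))).re
    pdX (pdX logNorm) x y + pdY (pdY logNorm) x y =
      logLaplacian h (v (x + y * Complex.I)) (deriv v (x + y * Complex.I)) := by
  have hasDerivAt_along {c : ℂ} {l : ℝ → ℂ} {t : ℝ} (hl : HasDerivAt l c t) {f : ℂ → E}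
      (hf : AnalyticAt ℂ f (l t)) : HasDerivAt (f ∘ l) (c • deriv f (l t)) t :=
    hf.differentiableAt.hasDerivAt.scomp t hl
  have hasDerivAt_horizontal (s : ℝ) : HasDerivAt (fun s : ℝ => s + y * Complex.I) 1 s :=
    (hasDerivAt_id (s : ℂ)).comp_ofReal.add_const _
  have hasDerivAt_vertical (s : ℝ) :
      HasDerivAt (fun s : ℝ => x + s * Complex.I) Complex.I s := by
    simpa using ((hasDerivAt_id (s : ℂ)).comp_ofReal.mul_const Complex.I).const_add (x : ℂ)
  have hxx := deriv_deriv_log_sesquilinear h hh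
    (((hasDerivAt_horizontal x).continuousAt.eventually hv.eventually_analyticAt).mono
      fun s hs => hasDerivAt_along (hasDerivAt_horizontal s) hs)
    ((hasDerivAt_along (hasDerivAt_horizontal x) hv.deriv).const_smul (1 : ℂ)) hp
  have hyy := deriv_deriv_log_sesquilinear h hh
    (((hasDerivAt_vertical y).continuousAt.eventually hv.eventually_analyticAt).mono
      fun s hs => hasDerivAt_along (hasDerivAt_vertical s) hs)
    ((hasDerivAt_along (hasDerivAt_vertical y) hv.deriv).const_smul Complex.I) hp
  have re_apply_I_smul (p w : E) : (h p (Complex.I • w)).re = -(h p w).im := by simp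
  have apply_I_smul_I_smul (w : E) : h (Complex.I • w) (Complex.I • w) = h w w := by
    simp [← mul_assoc]
  refine (congrArg₂ (· + ·) hxx hyy).trans ?_
  -- The terms with the second derivative `v''` cancel because `I • I • v'' = -v''`.
  simp only [Function.comp_apply, one_smul, re_apply_I_smul, apply_I_smul_I_smul, smul_smul,
    Complex.I_mul_I, neg_smul, map_neg, Complex.neg_re, logLaplacian, div_pow,
    ← Complex.normSq_eq_norm_sq, Complex.normSq_apply]
  ring

lemma logLaplacian_map {g : E → E} (hg : ∀ u w, h (g u) (g w) = h u w) (p w : E) :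
    logLaplacian h (g p) (g w) = logLaplacian h p w := by
  simp only [logLaplacian, hg]

lemma abs_logLaplacian_le (p w : E) :
    |logLaplacian h p w| ≤
      4 * (‖h‖ / |(h p p).re| + (‖h‖ * ‖p‖ / |(h p p).re|) ^ 2) * ‖w‖ ^ 2 := by
  have hww : |(h w w).re| ≤ ‖h‖ * ‖w‖ * ‖w‖ :=
    (Complex.abs_re_le_norm _).trans (h.le_opNorm₂ w w)
  have hpw : ‖h p w‖ ≤ ‖h‖ * ‖p‖ * ‖w‖ := h.le_opNorm₂ p w
  calc |logLaplacian h p w|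
      ≤ 4 * (|(h w w).re| / |(h p p).re| + (‖h p w‖ / |(h p p).re|) ^ 2) := by
        rw [logLaplacian, abs_mul, abs_of_pos (four_pos (α := ℝ))]
        gcongr
        refine (abs_sub _ _).trans_eq ?_
        simp only [abs_div, abs_pow, abs_norm]
    _ ≤ 4 * (‖h‖ * ‖w‖ * ‖w‖ / |(h p p).re| + (‖h‖ * ‖p‖ * ‖w‖ / |(h p p).re|) ^ 2) := by gcongr
    _ = _ := by ring

variable {α : Type*} {l : Filter α} {p w : α → E} {p₀ w₀ : E}

lemma tendsto_sesquilinear (hp : Tendsto p l (𝓝 p₀)) (hw : Tendsto w l (𝓝 w₀)) :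
    Tendsto (fun i => h (p i) (w i)) l (𝓝 (h p₀ w₀)) :=
  ((isBoundedBilinearMap_sesquilinear h).continuous.tendsto (p₀, w₀)).comp (hp.prodMk_nhds hw)

lemma tendsto_re_sesquilinear (hp : Tendsto p l (𝓝 p₀)) :
    Tendsto (fun i => (h (p i) (p i)).re) l (𝓝 (h p₀ p₀).re) :=
  (Complex.continuous_re.tendsto _).comp (tendsto_sesquilinear hp hp)

lemma tendsto_logLaplacian (hp : Tendsto p l (𝓝 p₀)) (hw : Tendsto w l (𝓝 w₀))
    (hp₀ : (h p₀ p₀).re ≠ 0) :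
    Tendsto (fun i => logLaplacian h (p i) (w i)) l (𝓝 (logLaplacian h p₀ w₀)) :=
  (((tendsto_re_sesquilinear hw).div (tendsto_re_sesquilinear hp) hp₀).sub
    (((tendsto_sesquilinear hp hw).norm.div (tendsto_re_sesquilinear hp) hp₀).pow 2)).const_mul 4

lemma isBigO_logLaplacian (hp : Tendsto p l (𝓝 p₀)) (hp₀ : (h p₀ p₀).re ≠ 0) :
    (fun i => logLaplacian h (p i) (w i)) =O[l] fun i => ‖w i‖ ^ 2 := by
  have hre := (tendsto_re_sesquilinear (h := h) hp).abs
  have hre₀ : |(h p₀ p₀).re| ≠ 0 := abs_ne_zero.2 hp₀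
  have hcoeff := ((tendsto_const_nhds (x := ‖h‖)).div hre hre₀).add
    (((hp.norm.const_mul ‖h‖).div hre hre₀).pow 2) |>.const_mul 4
  refine (IsBigO.of_norm_le fun i => abs_logLaplacian_le (p i) (w i)).trans ?_
  simpa only [one_mul] using! hcoeff.isBigO_one ℝ |>.mul (isBigO_refl (fun i => ‖w i‖ ^ 2) l)

end SesquilinearForm

lemma exp_smul_eq_sum_range_of_pow_eq_zero {𝕜 𝔸 : Type*} [Field 𝕜] [CharZero 𝕜] [Ring 𝔸]
    [Algebra 𝕜 𝔸] [TopologicalSpace 𝔸] [T2Space 𝔸] [IsTopologicalRing 𝔸]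
    {A : 𝔸} {k : ℕ} (hA : A ^ k = 0) (c : 𝕜) :
    NormedSpace.exp (c • A) = ∑ j ∈ Finset.range k, (c ^ j / (j.factorial : 𝕜)) • A ^ j := by
  rw [NormedSpace.exp_eq_tsum 𝕜]
  refine (tsum_eq_sum (s := Finset.range k) ?_).trans ?_
  · intro j hj
    rw [smul_pow, pow_eq_zero_of_le (not_lt.1 (Finset.mem_range.not.1 hj)) hA, smul_zero, smul_zero]
  · exact Finset.sum_congr rfl fun j _ => by rw [smul_pow, smul_smul, inv_mul_eq_div]

lemma isBigO_exp_smul_of_isNilpotent {𝔸 : Type*} [NormedRing 𝔸] [NormedAlgebra ℝ 𝔸]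
    {A : 𝔸} (hA : IsNilpotent A) {b : ℝ} (hb : 0 < b) :
    (fun t : ℝ => NormedSpace.exp (t • A)) =O[atTop] fun t => Real.exp (b * t) := by
  obtain ⟨k, hk⟩ := hA
  simp only [exp_smul_eq_sum_range_of_pow_eq_zero hk]
  refine IsBigO.fun_sum fun j _ => ?_
  have hpow : (fun t : ℝ => t ^ j) =O[atTop] fun t => Real.exp (b * t) :=
    (isLittleO_pow_exp_pos_mul_atTop j hb).isBigO
  simpa [div_eq_inv_mul] using
    (hpow.const_mul_left (j.factorial : ℝ)⁻¹).smul
      (isBigO_const_const (A ^ j) (one_ne_zero (α := ℝ)) atTop)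

section PeriodVector

/-- The filter of neighbourhoods of `i∞` in `ℂ`. -/
local notation "I∞" => comap Complex.im atTop

lemma tendsto_qParam_one : Tendsto (qParam 1) I∞ (𝓝 0) :=
  (qParam_tendsto one_pos).mono_right nhdsWithin_le_nhds

lemma hasDerivAt_qParam_one (z : ℂ) :
    HasDerivAt (qParam 1) (2 * Real.pi * Complex.I * qParam 1 z) z := by
  have hexp := (((hasDerivAt_id' z).const_mul (2 * Real.pi * Complex.I)).div_const
    ((1 : ℝ) : ℂ)).cexp
  exact hexp.congr_deriv (by simp [qParam, mul_comm])

variable {E : Type*} [NormedAddCommGroup E] [NormedSpace ℂ E]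
  {h : E →L⋆[ℂ] E →L[ℂ] ℂ} {A : E →L[ℂ] E} {a : ℂ → E}

lemma isBigO_comp_qParam_sub (ha : DifferentiableAt ℂ a 0) :
    (fun z => a (qParam 1 z) - a 0) =O[I∞] qParam 1 := by
  simpa [Function.comp_def] using ha.isBigO_sub.comp_tendsto tendsto_qParam_one

lemma isBigO_exp_im_smul_apply (hA : IsNilpotent A) {f : ℂ → E} (hf : f =O[I∞] qParam 1) {b : ℝ}
    (hb : b < 2 * Real.pi) :
    (fun z : ℂ => NormedSpace.exp (z.im • Complex.I • A) (f z)) =O[I∞]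
      fun z => Real.exp (-b * z.im) := by
  have hexp : (fun z : ℂ => NormedSpace.exp (z.im • Complex.I • A)) =O[I∞]
      fun z => Real.exp ((2 * Real.pi - b) * z.im) :=
    (isBigO_exp_smul_of_isNilpotent (hA.smul Complex.I) (sub_pos.2 hb)).comp_tendsto tendsto_comap
  refine ((IsBigO.of_norm_le fun z => ContinuousLinearMap.le_opNorm _ _).trans
    (hexp.norm_left.mul hf.norm_norm)).congr_right fun z => ?_
  rw [norm_qParam, ← Real.exp_add]
  ring_nf

variable [CompleteSpace E]

lemma hasDerivAt_exp_smul_apply (A : E →L[ℂ] E) {f : ℂ → E} {f' : E} {z : ℂ}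
    (hf : HasDerivAt f f' z) :
    HasDerivAt (fun w => NormedSpace.exp (w • A) (f w))
      (NormedSpace.exp (z • A) (A (f z) + f')) z :=
  ((hasDerivAt_exp_smul_const A z).clm_apply hf).congr_deriv
    (map_add (NormedSpace.exp (z • A)) _ _).symm

lemma exp_apply_eq_self_of_apply_eq_zero {p : E} (hp : A p = 0) : NormedSpace.exp A p = p := by
  have hderiv (z : ℂ) := hasDerivAt_exp_smul_apply A (hasDerivAt_const z p)
  have hconst := is_const_of_deriv_eq_zero (fun z => (hderiv z).differentiableAt)
    (fun z => (hderiv z).deriv.trans (by simp [hp])) 1 0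
  simpa using hconst

lemma sesquilinear_exp_real_smul (hA : ∀ u w, h (A u) w + h u (A w) = 0) (x : ℝ) (u w : E) :
    h (NormedSpace.exp ((x : ℂ) • A) u) (NormedSpace.exp ((x : ℂ) • A) w) = h u w := by
  have exp_comm (z : ℂ) (u : E) :
      NormedSpace.exp (z • A) (A u) = A (NormedSpace.exp (z • A) u) :=
    DFunLike.congr_fun ((Commute.refl A).smul_left z).exp_left.eq u
  have hasDerivAt_exp (u : E) (x : ℝ) :
      HasDerivAt (fun x : ℝ => NormedSpace.exp ((x : ℂ) • A) u)
        (A (NormedSpace.exp ((x : ℂ) • A) u)) x := by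
    simpa only [add_zero, exp_comm, one_smul] using!
      (hasDerivAt_exp_smul_apply A (hasDerivAt_const (x : ℂ) u)).scomp x
        (hasDerivAt_id (x : ℂ)).comp_ofReal
  have hderiv (x : ℝ) := hasDerivAt_sesquilinear h (hasDerivAt_exp u x) (hasDerivAt_exp w x)
  have hconst := is_const_of_deriv_eq_zero (fun x => (hderiv x).differentiableAt)
    (fun x => (hderiv x).deriv.trans (by rw [add_comm, hA])) x 0
  simpa using hconst

lemma exp_smul_eq_exp_re_mul_exp_im (A : E →L[ℂ] E) (z : ℂ) :
    NormedSpace.exp (z • A) =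
      NormedSpace.exp ((z.re : ℂ) • A) * NormedSpace.exp (z.im • Complex.I • A) := by
  let +nondep : NormedAlgebra ℚ (E →L[ℂ] E) := .restrictScalars ℚ ℂ _
  rw [← NormedSpace.exp_add_of_commute]
  · rw [← Complex.coe_smul, smul_smul, ← add_smul, Complex.re_add_im]
  · exact (((Commute.refl A).smul_left _).smul_right _).smul_right _

/-- The lifted period map `z ↦ exp(zA) a(e^{2πiz})` of a degeneration with monodromy logarithm `A`
and holomorphic part `a`. -/
noncomputable def periodVector (A : E →L[ℂ] E) (a : ℂ → E) (z : ℂ) : E :=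
  NormedSpace.exp (z • A) (a (qParam 1 z))

lemma hasDerivAt_periodVector {z : ℂ} (ha : DifferentiableAt ℂ a (qParam 1 z)) :
    HasDerivAt (periodVector A a)
      (NormedSpace.exp (z • A) (A (a (qParam 1 z)) +
        (2 * Real.pi * Complex.I * qParam 1 z) • deriv a (qParam 1 z))) z :=
  hasDerivAt_exp_smul_apply A (ha.hasDerivAt.scomp z (hasDerivAt_qParam_one z))

lemma analyticAt_periodVector {z : ℂ} (ha : AnalyticAt ℂ a (qParam 1 z)) :
    AnalyticAt ℂ (periodVector A a) z := by
  refine Complex.analyticAt_iff_eventually_differentiableAt.2 ?_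
  filter_upwards [continuous_qParam.continuousAt.eventually ha.eventually_analyticAt] with w hw
  exact (hasDerivAt_periodVector hw.differentiableAt).differentiableAt

lemma tendsto_exp_im_smul_apply (hA : IsNilpotent A) (ha : DifferentiableAt ℂ a 0)
    (hAa : A (a 0) = 0) :
    Tendsto (fun z : ℂ => NormedSpace.exp (z.im • Complex.I • A) (a (qParam 1 z))) I∞
      (𝓝 (a 0)) := by
  have hdecay : Tendsto (fun z : ℂ => Real.exp (-Real.pi * z.im)) I∞ (𝓝 0) :=
    Real.tendsto_exp_atBot.comp
      (tendsto_comap.const_mul_atTop_of_neg (neg_lt_zero.2 Real.pi_pos))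
  have hdiff := (isBigO_exp_im_smul_apply hA (isBigO_comp_qParam_sub ha)
    (lt_two_mul_self Real.pi_pos)).trans_tendsto hdecay
  refine tendsto_sub_nhds_zero_iff.1 (hdiff.congr fun z => ?_)
  rw [map_sub, exp_apply_eq_self_of_apply_eq_zero (p := a 0) (by simp [hAa])]

lemma isBigO_velocity_qParam (ha : AnalyticAt ℂ a 0) (hAa : A (a 0) = 0) :
    (fun z => A (a (qParam 1 z)) + (2 * Real.pi * Complex.I * qParam 1 z) • deriv a (qParam 1 z))
      =O[I∞] qParam 1 := by
  have hAq : (fun z => A (a (qParam 1 z))) =O[I∞] qParam 1 := by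
    simpa [hAa] using
      (A.isBigO_comp _ _).trans (isBigO_comp_qParam_sub ha.differentiableAt)
  have hderiv : (fun z => deriv a (qParam 1 z)) =O[I∞] fun _ => (1 : ℂ) :=
    (ha.deriv.continuousAt.tendsto.comp tendsto_qParam_one).isBigO_one ℂ
  have hq : (fun z => 2 * Real.pi * Complex.I * qParam 1 z) =O[I∞] qParam 1 :=
    isBigO_const_mul_self _ _ _
  exact hAq.add (by simpa using hq.smul hderiv)

lemma eventually_analyticAt_comp_qParam (ha : AnalyticAt ℂ a 0) :
    ∀ᶠ z in I∞, AnalyticAt ℂ a (qParam 1 z) :=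
  tendsto_qParam_one.eventually ha.eventually_analyticAt

lemma eventually_sesquilinear_periodVector_pos (hskew : ∀ u w, h (A u) w + h u (A w) = 0)
    (hA : IsNilpotent A) (ha : DifferentiableAt ℂ a 0) (hAa : A (a 0) = 0)
    (hpos : 0 < (h (a 0) (a 0)).re) :
    ∀ᶠ z in I∞, 0 < (h (periodVector A a z) (periodVector A a z)).re := by
  filter_upwards [(tendsto_re_sesquilinear (h := h)
    (tendsto_exp_im_smul_apply hA ha hAa)).eventually_const_lt hpos] with z hz
  rwa [periodVector, exp_smul_eq_exp_re_mul_exp_im, mul_apply_eq_comp,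
    sesquilinear_exp_real_smul hskew]

lemma isBigO_logLaplacian_periodVector (hskew : ∀ u w, h (A u) w + h u (A w) = 0)
    (hA : IsNilpotent A) (ha : AnalyticAt ℂ a 0) (hAa : A (a 0) = 0)
    (ha₀ : (h (a 0) (a 0)).re ≠ 0) {b : ℝ} (hb : b < 4 * Real.pi) :
    (fun z => logLaplacian h (periodVector A a z) (deriv (periodVector A a) z)) =O[I∞]
      fun z => Real.exp (-b * z.im) := by
  have hvelocity := isBigO_exp_im_smul_apply hA (isBigO_velocity_qParam ha hAa)
    (b := b / 2) (by linarith)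
  refine ((isBigO_logLaplacian (tendsto_exp_im_smul_apply hA ha.differentiableAt hAa) ha₀).trans
    (hvelocity.norm_left.pow 2)).congr' ?_ (.of_forall fun z => ?_)
  · filter_upwards [eventually_analyticAt_comp_qParam ha] with z hz
    rw [(hasDerivAt_periodVector hz.differentiableAt).deriv, periodVector,
      exp_smul_eq_exp_re_mul_exp_im, mul_apply_eq_comp, mul_apply_eq_comp,
      logLaplacian_map (sesquilinear_exp_real_smul hskew z.re)]
  · simp only [← Real.exp_nat_mul]
    push_cast
    ring_nf

lemma integrableOn_Ici_sqrt_abs_of_isBigO_exp_neg {f : ℝ → ℝ} {b c : ℝ} (hb : 0 < b)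
    (hf : ContinuousOn f (Set.Ici c)) (hfb : f =O[atTop] fun s => Real.exp (-b * s)) :
    IntegrableOn (fun s => √|f s|) (Set.Ici c) := by
  have hsqrt : (fun s => √|f s|) =O[atTop] fun s => Real.exp (-(b / 2) * s) := by
    refine (hfb.abs_left.sqrt (.of_forall fun s => (Real.exp_pos _).le)).congr_right fun s => ?_
    rw [← Real.exp_half]
    ring_nf
  exact (integrableOn_Ici_iff_integrableOn_Ioi (by finiteness)).2
    (integrable_of_isBigO_exp_neg (half_pos hb) hf.abs.sqrt hsqrt)

lemma integrableOn_vertical_ray_sqrt_abs {f : ℂ → ℝ} {b : ℝ} (hb : 0 < b) (x Y : ℝ)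
    (hf : ∀ z : ℂ, Y ≤ z.im → ContinuousAt f z)
    (hfb : f =O[I∞] fun z => Real.exp (-b * z.im)) :
    IntegrableOn (fun s : ℝ => √|f (x + (Y + s : ℝ) * Complex.I)|) (Set.Ici 0) := by
  have him (s : ℝ) : (x + (Y + s : ℝ) * Complex.I : ℂ).im = Y + s := by simp
  have hray : Tendsto (fun s : ℝ => (x + (Y + s : ℝ) * Complex.I : ℂ)) atTop I∞ := by
    simpa only [tendsto_comap_iff, Function.comp_def, him, id] using
      tendsto_atTop_add_const_left _ Y (tendsto_id (α := ℝ))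
  refine integrableOn_Ici_sqrt_abs_of_isBigO_exp_neg hb (fun s hs => ?_) ?_
  · refine ((hf _ ?_).comp (f := fun s : ℝ => (x + (Y + s : ℝ) * Complex.I : ℂ))
      (by fun_prop)).continuousWithinAt
    rw [him]
    exact le_add_of_nonneg_right hs
  · refine (hfb.comp_tendsto hray).trans (.of_bound (Real.exp (-b * Y)) (.of_forall fun s => ?_))
    simp only [Function.comp_apply, him, Real.norm_eq_abs, Real.abs_exp, ← Real.exp_add]
    exact (congrArg Real.exp (by ring)).le

theorem finite_distance_of_degree_zero_general (hh : ∀ u w, conj (h u w) = h w u)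
    (hskew : ∀ u w, h (A u) w + h u (A w) = 0) (hA : IsNilpotent A) (ha : AnalyticAt ℂ a 0)
    (hAa : A (a 0) = 0) (hpos : 0 < (h (a 0) (a 0)).re) (y₀ : ℝ) {b : ℝ}
    (hb : b < 4 * Real.pi) {F : ℝ → ℝ → ℂ}
    (hF : ∀ x y : ℝ, F x y =
      h (periodVector A a (x + y * Complex.I)) (periodVector A a (x + y * Complex.I)))
    {logF : ℝ → ℝ → ℝ} (hlogF : ∀ x y, logF x y = Real.log (F x y).re) :
    (∀ x y : ℝ, (F x y).im = 0) ∧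
    ∃ Y : ℝ, y₀ < Y ∧ ∃ C : ℝ, 0 < C ∧
      (∀ x y : ℝ, Y ≤ y → 0 < (F x y).re) ∧
      (∀ x y : ℝ, Y ≤ y →
        |pdX (pdX logF) x y + pdY (pdY logF) x y| ≤ C * Real.exp (-b * y)) ∧
      (∀ x₀ : ℝ, IntegrableOn
        (fun s : ℝ => √|pdX (pdX logF) x₀ (Y + s) + pdY (pdY logF) x₀ (Y + s)|)
        (Set.Ici 0)) := by
  obtain rfl : logF = fun x y : ℝ => Real.log
      (h (periodVector A a (x + y * Complex.I)) (periodVector A a (x + y * Complex.I))).re := by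
    funext x y
    rw [hlogF, hF]
  simp only [hF]
  refine ⟨fun x y => Complex.conj_eq_iff_im.1 (hh _ _), ?_⟩
  have hbigO {c : ℝ} (hc : c < 4 * Real.pi) :=
    isBigO_logLaplacian_periodVector hskew hA ha hAa hpos.ne' hc
  obtain ⟨C, hC, hbound⟩ := (hbigO hb).exists_pos
  obtain ⟨Y, hY₀, hY⟩ := ((atTop_basis' (y₀ + 1)).comap Complex.im).eventually_iff.1
    ((eventually_sesquilinear_periodVector_pos hskew hA ha.differentiableAt hAa hpos).and
      ((eventually_analyticAt_comp_qParam ha).and hbound.bound))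
  have hposY (z : ℂ) (hz : Y ≤ z.im) := (hY hz).1
  have hanalytic (z : ℂ) (hz : Y ≤ z.im) : AnalyticAt ℂ (periodVector A a) z :=
    analyticAt_periodVector (hY hz).2.1
  have him {x y : ℝ} (hy : Y ≤ y) : Y ≤ (x + y * Complex.I : ℂ).im := by simpa
  have hlaplacian (x y : ℝ) (hy : Y ≤ y) :=
    laplacian_log_sesquilinear (x := x) hh (hanalytic _ (him hy)) (hposY _ (him hy)).ne'
  refine ⟨Y, by linarith, C, hC, fun x y hy => hposY _ (him hy), fun x y hy => ?_, fun x₀ => ?_⟩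
  · rw [hlaplacian x y hy]
    simpa using (hY (him (x := x) hy)).2.2
  · refine (integrableOn_vertical_ray_sqrt_abs Real.pi_pos x₀ Y (fun z hz => ?_)
      (hbigO (by linarith [Real.pi_pos]))).congr_fun (fun s hs => ?_) measurableSet_Ici
    · exact tendsto_logLaplacian (hanalytic z hz).continuousAt (hanalytic z hz).deriv.continuousAt
        (hposY z hz).ne'
    · simp only [hlaplacian x₀ (Y + s) (le_add_of_nonneg_right hs)]

end PeriodVector

section Matrix

variable {ι : Type*}

/-- The Gram matrix of the Hermitian form `(u, w) ↦ iⁿ Q(w, ū)` attached to a real polarization `Q`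
of weight `n`. It is `iⁿ Qᵀ` rather than `iⁿ Q` because `sesquilinearForm` is linear in its second
argument. -/
noncomputable def polarizationGram (n : ℕ) (Q : Matrix ι ι ℝ) : Matrix ι ι ℂ :=
  Complex.I ^ n • Q.transpose.map Complex.ofReal

lemma isHermitian_polarizationGram {n : ℕ} {Q : Matrix ι ι ℝ}
    (hQ : Q.transpose = (-1 : ℝ) ^ n • Q) : (polarizationGram n Q).IsHermitian := by
  ext j k
  have hQjk : Q k j = (-1) ^ n * Q j k := congrFun₂ hQ j k
  simp only [polarizationGram, Matrix.conjTranspose_apply, Matrix.smul_apply, Matrix.map_apply,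
    Matrix.transpose_apply, hQjk, smul_eq_mul, star_mul', star_pow, RCLike.star_def,
    Complex.conj_I, Complex.conj_ofReal, Complex.ofReal_mul, Complex.ofReal_pow,
    Complex.ofReal_neg, Complex.ofReal_one, neg_pow Complex.I]
  ring

variable [Fintype ι]

lemma conjTranspose_mul_polarizationGram_add {N Q : Matrix ι ι ℝ} (n : ℕ)
    (hQN : N.transpose * Q + Q * N = 0) :
    (N.map Complex.ofReal).conjTranspose * polarizationGram n Q +
      polarizationGram n Q * N.map Complex.ofReal = 0 := by
  classical
  have hreal : N.transpose * Q.transpose + Q.transpose * N = 0 := by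
    simpa [add_comm] using congrArg Matrix.transpose hQN
  have hconj : (N.map Complex.ofReal).conjTranspose = N.transpose.map Complex.ofReal := by
    ext j k
    simp
  have hcomplex := congrArg (fun M => Complex.I ^ n • Complex.ofRealHom.mapMatrix M) hreal
  simpa only [hconj, polarizationGram, map_add, map_mul, map_zero, smul_add, smul_zero,
    Matrix.mul_smul, Matrix.smul_mul] using! hcomplex

variable [DecidableEq ι]

lemma matrix_pow_card_eq_zero_of_isNilpotent {R : Type*} [CommRing R] [NoZeroDivisors R]
    {M : Matrix ι ι R} (hM : IsNilpotent M) : M ^ Fintype.card ι = 0 := by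
  have hcharpoly : M.charpoly = Polynomial.X ^ Fintype.card ι :=
    sub_eq_zero.1 (Matrix.isNilpotent_charpoly_sub_pow_of_isNilpotent hM).eq_zero
  simpa [hcharpoly] using Matrix.aeval_self_charpoly M

/-- The identification of matrices with the continuous operators on column vectors, through which
`periodVector` applies to a matrix. -/
noncomputable def mulVecCLM : Matrix ι ι ℂ ≃ₐ[ℂ] ((ι → ℂ) →L[ℂ] (ι → ℂ)) :=
  Matrix.toLinAlgEquiv'.trans (Module.End.toContinuousLinearMap (ι → ℂ))

lemma mulVecCLM_apply (M : Matrix ι ι ℂ) (u : ι → ℂ) : mulVecCLM M u = M.mulVec u := rfl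

lemma periodVector_mulVecCLM {M : Matrix ι ι ℂ} {k : ℕ} (hM : M ^ k = 0) (a : ℂ → ι → ℂ) (z : ℂ) :
    periodVector (mulVecCLM M) a z =
      (∑ j ∈ Finset.range k, (z ^ j / (j.factorial : ℂ)) • M ^ j).mulVec
        (a (Complex.exp (2 * Real.pi * Complex.I * z))) := by
  have hA : mulVecCLM M ^ k = 0 := by rw [← map_pow, hM, map_zero]
  rw [periodVector, exp_smul_eq_sum_range_of_pow_eq_zero hA]
  simp only [← map_pow, ← map_smul, ← map_sum, mulVecCLM_apply, qParam, Complex.ofReal_one, div_one]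

/-- The sesquilinear form `(u, w) ↦ u* H w` defined by a matrix `H`. -/
noncomputable def sesquilinearForm (H : Matrix ι ι ℂ) : (ι → ℂ) →L⋆[ℂ] (ι → ℂ) →L[ℂ] ℂ :=
  (Matrix.toLinearMap₂' ℂ H).toContinuousBilinearMap.comp
    (starL ℂ : (ι → ℂ) ≃L⋆[ℂ] (ι → ℂ)).toContinuousLinearMap

lemma sesquilinearForm_apply (H : Matrix ι ι ℂ) (u w : ι → ℂ) :
    sesquilinearForm H u w = star u ⬝ᵥ H.mulVec w :=
  Matrix.toLinearMap₂'_apply' H (star u) w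

lemma conj_sesquilinearForm {H : Matrix ι ι ℂ} (hH : H.IsHermitian) (u w : ι → ℂ) :
    conj (sesquilinearForm H u w) = sesquilinearForm H w u := by
  rw [sesquilinearForm_apply, sesquilinearForm_apply, starRingEnd_apply,
    ← Matrix.star_dotProduct_star, star_star, Matrix.star_mulVec, hH.eq, ← Matrix.dotProduct_mulVec]

lemma sesquilinearForm_mulVec_add {H M : Matrix ι ι ℂ} (hM : M.conjTranspose * H + H * M = 0)
    (u w : ι → ℂ) :
    sesquilinearForm H (M.mulVec u) w + sesquilinearForm H u (M.mulVec w) = 0 := by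
  simp only [sesquilinearForm_apply, Matrix.star_mulVec, ← Matrix.dotProduct_mulVec,
    Matrix.mulVec_mulVec, ← dotProduct_add, ← Matrix.add_mulVec, hM, Matrix.zero_mulVec,
    dotProduct_zero]

lemma sesquilinearForm_polarizationGram (n : ℕ) (Q : Matrix ι ι ℝ) (u w : ι → ℂ) :
    sesquilinearForm (polarizationGram n Q) u w =
      Complex.I ^ n * ∑ j, ∑ k, w j * (Q j k : ℂ) * star u k := by
  rw [Finset.sum_comm]
  simp only [sesquilinearForm_apply, polarizationGram, dotProduct, Matrix.mulVec, Finset.mul_sum,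
    Matrix.smul_apply, Matrix.map_apply, Matrix.transpose_apply, smul_eq_mul]
  exact Finset.sum_congr rfl fun k _ => Finset.sum_congr rfl fun j _ => by ring

end Matrix

/-- in the setting of the period pairing `F`, if `Qᵀ = (-1)ⁿ·Q`, `N·a₀ = 0`
and `Q̃(a₀, conj a₀)` is real and positive, then `F` is real-valued and eventually positive,
`|Δ log F| ≤ C·e^{-π y}` for `y ≥ Y`, and every vertical ray has finite length with respect
to the density `|Δ log F|`. -/
theorem finite_distance_of_degree_zero
    (n m : ℕ) (hn : 1 ≤ n) (hm : 1 ≤ m)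
    (N Q : Matrix (Fin m) (Fin m) ℝ)
    (hNnil : IsNilpotent N)
    (hQN : N.transpose * Q + Q * N = 0)
    (hQsym : Q.transpose = (-1 : ℝ) ^ n • Q)
    (r : ℝ) (hr : 0 < r)
    (a : ℂ → (Fin m → ℂ))
    (ha : AnalyticOnNhd ℂ a (Metric.ball 0 r))
    (ha0 : a 0 ≠ 0)
    (Nc : Matrix (Fin m) (Fin m) ℂ) (hNc : Nc = N.map Complex.ofReal)
    (Qc : (Fin m → ℂ) → (Fin m → ℂ) → ℂ)
    (hQc : ∀ u v, Qc u v = ∑ j, ∑ k, u j * (Q j k : ℂ) * v k)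
    (Qt : (Fin m → ℂ) → (Fin m → ℂ) → ℂ)
    (hQt : ∀ u v, Qt u v = Complex.I ^ n * Qc u v)
    (hNa0 : Nc.mulVec (a 0) = 0)
    (y₀ : ℝ) (hy₀ : y₀ = max 0 (-(Real.log r) / (2 * Real.pi)))
    (Expz : ℂ → Matrix (Fin m) (Fin m) ℂ)
    (hExpz : ∀ z : ℂ, Expz z =
      ∑ k ∈ Finset.range (m + 1), (z ^ k / (Nat.factorial k : ℂ)) • Nc ^ k)
    (F : ℝ → ℝ → ℂ)
    (hF : ∀ x y : ℝ, F x y =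
      Qt ((Expz ((x : ℂ) + (y : ℂ) * Complex.I)).mulVec
            (a (Complex.exp (2 * Real.pi * Complex.I * ((x : ℂ) + (y : ℂ) * Complex.I)))))
         (star ((Expz ((x : ℂ) + (y : ℂ) * Complex.I)).mulVec
            (a (Complex.exp (2 * Real.pi * Complex.I * ((x : ℂ) + (y : ℂ) * Complex.I)))))))
    (hpos : ∃ c : ℝ, 0 < c ∧ Qt (a 0) (star (a 0)) = (c : ℂ))
    (logF : ℝ → ℝ → ℝ)
    (hlogF : ∀ x y : ℝ, logF x y = Real.log ((F x y).re)) :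
    (∀ x y : ℝ, y₀ < y → (F x y).im = 0) ∧
    ∃ Y : ℝ, y₀ < Y ∧ ∃ C : ℝ, 0 < C ∧
      (∀ x y : ℝ, Y ≤ y → 0 < (F x y).re) ∧
      (∀ x y : ℝ, Y ≤ y →
        |pdX (pdX logF) x y + pdY (pdY logF) x y| ≤ C * Real.exp (-Real.pi * y)) ∧
      (∀ x₀ : ℝ, IntegrableOn
          (fun s : ℝ => Real.sqrt
            |pdX (pdX logF) x₀ (Y + s) + pdY (pdY logF) x₀ (Y + s)|)
          (Set.Ici 0)) := by
  have hNc_nil : IsNilpotent Nc := hNc ▸ hNnil.map Complex.ofRealHom.mapMatrix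
  have hNc_pow : Nc ^ (m + 1) = 0 :=
    pow_eq_zero_of_le (by simp) (matrix_pow_card_eq_zero_of_isNilpotent hNc_nil)
  have hQt_eq (u w : Fin m → ℂ) : sesquilinearForm (polarizationGram n Q) u w = Qt w (star u) := by
    rw [sesquilinearForm_polarizationGram, ← hQc, ← hQt]
  obtain ⟨c, hc, hQtc⟩ := hpos
  refine (finite_distance_of_degree_zero_general (A := mulVecCLM Nc)
    (conj_sesquilinearForm (isHermitian_polarizationGram hQsym))
    (sesquilinearForm_mulVec_add (hNc ▸ conjTranspose_mul_polarizationGram_add n hQN))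
    (hNc_nil.map mulVecCLM) (ha 0 (Metric.mem_ball_self hr)) hNa0 (by simpa [hQt_eq, hQtc]) y₀
    (by linarith [Real.pi_pos]) (fun x y => ?_) hlogF).imp_left fun him x y _ => him x y
  rw [hQt_eq, hF, hExpz, periodVector_mulVecCLM hNc_pow]
end
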